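/- Let (X,T) be a topological dynamical system with a compatible metric d. Then the upper metric mean dimension satisfies mdim_M^+(T,X,d) = limsup_{ε→0} [ sup_{μ∈E(X,T)} R_{μ,L∞}(ε) ] / log(1/ε), where the supremum is over all ergodic T-invariant Borel probability measures. -/

import Mathlib

open Filter MeasureTheory Set
open scoped ENNReal Topology

noncomputable section

namespace MMD

variable {X : Type*}

/-- The `n`-th Bowen metric `d_n(x,y) = max_{0 ≤ j ≤ n-1} d(T^j x, T^j y)`. -/
noncomputable def bowenDist [PseudoMetricSpace X] (T : X → X) (n : ℕ) (x y : X) : ℝ :=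
  ⨆ j : Fin n, dist (T^[(j : ℕ)] x) (T^[(j : ℕ)] y)

/-- `r_n(T,d,ε,Z)`: minimal cardinality of an `(n,ε)`-spanning set of `Z`. -/
noncomputable def spanNum [PseudoMetricSpace X] (T : X → X) (n : ℕ) (ε : ℝ) (Z : Set X) : ℕ :=
  sInf {k | ∃ E : Finset X, E.card = k ∧ ∀ z ∈ Z, ∃ y ∈ E, bowenDist T n z y < ε}

/-- `s_n(T,d,ε,Z)`: maximal cardinality of an `(n,ε)`-separated subset of `Z`. -/
noncomputable def sepNum [PseudoMetricSpace X] (T : X → X) (n : ℕ) (ε : ℝ) (Z : Set X) : ℕ :=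
  sSup {k | ∃ F : Finset X, ↑F ⊆ Z ∧ F.card = k ∧
    ∀ x ∈ F, ∀ y ∈ F, x ≠ y → ε ≤ bowenDist T n x y}

/-- `limsup_{n→∞} (1/n) log r_n(T,d,ε,X)`. -/
noncomputable def spanGrowth [PseudoMetricSpace X] (T : X → X) (ε : ℝ) : ℝ≥0∞ :=
  Filter.limsup (fun n : ℕ => ENNReal.ofReal (Real.log (spanNum T n ε Set.univ)) / (n : ℝ≥0∞))
    Filter.atTop

/-- Upper metric mean dimension. -/
noncomputable def mdimMUpper [PseudoMetricSpace X] (T : X → X) : ℝ≥0∞ :=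
  Filter.limsup (fun ε : ℝ => spanGrowth T ε / ENNReal.ofReal (Real.log (1 / ε)))
    (nhdsWithin 0 (Set.Ioi 0))

/-- Lower metric mean dimension. -/
noncomputable def mdimMLower [PseudoMetricSpace X] (T : X → X) : ℝ≥0∞ :=
  Filter.liminf (fun ε : ℝ => spanGrowth T ε / ENNReal.ofReal (Real.log (1 / ε)))
    (nhdsWithin 0 (Set.Ioi 0))

/-- A finite (Borel) partition given as a finite set of measurable, pairwise disjoint sets
covering the space. -/
def IsFinPartition {Y : Type*} [MeasurableSpace Y] (P : Finset (Set Y)) : Prop :=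
  (∀ s ∈ P, MeasurableSet s) ∧ (∀ s ∈ P, ∀ t ∈ P, s ≠ t → Disjoint s t) ∧
    ⋃₀ (P : Set (Set Y)) = Set.univ

/-- Mutual information `I(ξ;η)` of two random variables, as the supremum over finite
measurable partitions of the target spaces. -/
noncomputable def mutualInfo {Ω A B : Type*} [MeasurableSpace Ω] [MeasurableSpace A]
    [MeasurableSpace B] (P : Measure Ω) (ξ : Ω → A) (η : Ω → B) : ℝ≥0∞ :=
  ⨆ (p : Finset (Set A)) (_ : IsFinPartition p) (q : Finset (Set B)) (_ : IsFinPartition q),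
    ENNReal.ofReal (∑ s ∈ p, ∑ t ∈ q,
      (P (ξ ⁻¹' s ∩ η ⁻¹' t)).toReal *
        Real.log ((P (ξ ⁻¹' s ∩ η ⁻¹' t)).toReal /
          ((P (ξ ⁻¹' s)).toReal * (P (η ⁻¹' t)).toReal)))

/-- The `L^∞` rate distortion function `R_{μ,L∞}(ε,s)`: the infimum of `I(ξ;η)/n` over all
`n ≥ 1` and all joint distributions `ν` of `(ξ, (η_0,…,η_{n-1}))` such that `ξ` has law `μ`,
the `η_k` take (almost surely) finitely many values, and
`E(#{0 ≤ k ≤ n-1 : d(T^k ξ, η_k) ≥ ε}) < s n`. -/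
noncomputable def RDistLInftyS [PseudoMetricSpace X] [MeasurableSpace X] (T : X → X)
    (μ : Measure X) (ε s : ℝ) : ℝ≥0∞ :=
  ⨅ (n : ℕ) (_ : 0 < n) (ν : Measure (X × (Fin n → X))) (_ : IsProbabilityMeasure ν)
    (_ : ν.map Prod.fst = μ) (_ : ∃ S : Finset X, ν {p | ∀ k, p.2 k ∈ S} = 1)
    (_ : ∫⁻ p, (Nat.card {k : Fin n // ε ≤ dist (T^[(k : ℕ)] p.1) (p.2 k)} : ℝ≥0∞) ∂ν
        < ENNReal.ofReal (s * n)),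
    mutualInfo ν Prod.fst Prod.snd / (n : ℝ≥0∞)

/-- `R_{μ,L∞}(ε) = lim_{s→0} R_{μ,L∞}(ε,s)` (the limit equals the supremum over `s > 0`
by monotonicity). -/
noncomputable def RDistLInfty [PseudoMetricSpace X] [MeasurableSpace X] (T : X → X)
    (μ : Measure X) (ε : ℝ) : ℝ≥0∞ :=
  ⨆ (s : ℝ) (_ : 0 < s), RDistLInftyS T μ ε s

/-- The `L¹` rate distortion function `R_{μ,1}(ε)`. -/
noncomputable def RDistL1 [PseudoMetricSpace X] [MeasurableSpace X] (T : X → X)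
    (μ : Measure X) (ε : ℝ) : ℝ≥0∞ :=
  ⨅ (n : ℕ) (_ : 0 < n) (ν : Measure (X × (Fin n → X))) (_ : IsProbabilityMeasure ν)
    (_ : ν.map Prod.fst = μ) (_ : ∃ S : Finset X, ν {p | ∀ k, p.2 k ∈ S} = 1)
    (_ : ∫⁻ p, ∑ k : Fin n, ENNReal.ofReal (dist (T^[(k : ℕ)] p.1) (p.2 k)) ∂ν
        < ENNReal.ofReal (ε * n)),
    mutualInfo ν Prod.fst Prod.snd / (n : ℝ≥0∞)

/-- `R^δ_μ(T,n,ε)`: minimal number of Bowen `(n,ε)`-balls whose union has `μ`-measure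
greater than `1 - δ`. -/
noncomputable def katokNum [PseudoMetricSpace X] [MeasurableSpace X] (T : X → X)
    (μ : Measure X) (n : ℕ) (ε δ : ℝ) : ℕ :=
  sInf {k | ∃ E : Finset X, E.card = k ∧
    ENNReal.ofReal (1 - δ) < μ (⋃ x ∈ E, {y | bowenDist T n x y < ε})}

/-- `h̄^K_μ(T,ε,δ)`. -/
noncomputable def katokUpperD [PseudoMetricSpace X] [MeasurableSpace X] (T : X → X)
    (μ : Measure X) (ε δ : ℝ) : ℝ≥0∞ :=
  Filter.limsup (fun n : ℕ => ENNReal.ofReal (Real.log (katokNum T μ n ε δ)) / (n : ℝ≥0∞))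
    Filter.atTop

/-- `ḥ^K_μ(T,ε,δ)`. -/
noncomputable def katokLowerD [PseudoMetricSpace X] [MeasurableSpace X] (T : X → X)
    (μ : Measure X) (ε δ : ℝ) : ℝ≥0∞ :=
  Filter.liminf (fun n : ℕ => ENNReal.ofReal (Real.log (katokNum T μ n ε δ)) / (n : ℝ≥0∞))
    Filter.atTop

/-- `h̄^K_μ(T,ε) = lim_{δ→0} h̄^K_μ(T,ε,δ)` (equal to the supremum over `δ ∈ (0,1)` by
monotonicity). -/
noncomputable def katokUpper [PseudoMetricSpace X] [MeasurableSpace X] (T : X → X)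
    (μ : Measure X) (ε : ℝ) : ℝ≥0∞ :=
  ⨆ (δ : ℝ) (_ : δ ∈ Set.Ioo (0 : ℝ) 1), katokUpperD T μ ε δ

/-- `ḥ^K_μ(T,ε) = lim_{δ→0} ḥ^K_μ(T,ε,δ)`. -/
noncomputable def katokLower [PseudoMetricSpace X] [MeasurableSpace X] (T : X → X)
    (μ : Measure X) (ε : ℝ) : ℝ≥0∞ :=
  ⨆ (δ : ℝ) (_ : δ ∈ Set.Ioo (0 : ℝ) 1), katokLowerD T μ ε δ

/-- The empirical measure `(1/n) Σ_{j=0}^{n-1} δ_{T^j x}`. -/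
noncomputable def empMeas [MeasurableSpace X] (T : X → X) (n : ℕ) (x : X) : Measure X :=
  (n : ℝ≥0∞)⁻¹ • ∑ j ∈ Finset.range n, Measure.dirac (T^[j] x)

/-- Pfister–Sullivan entropy `PS_μ(T,d,ε)`: infimum over weak* open neighborhoods `F` of `μ`
of `limsup_n (1/n) log s_n(T,d,ε,X_{n,F})`, where
`X_{n,F} = {x : (1/n) Σ_{j<n} δ_{T^j x} ∈ F}`. -/
noncomputable def PSent [MetricSpace X] [MeasurableSpace X] [OpensMeasurableSpace X]
    (T : X → X) (μ : ProbabilityMeasure X) (ε : ℝ) : ℝ≥0∞ :=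
  ⨅ (F : Set (ProbabilityMeasure X)) (_ : IsOpen F) (_ : μ ∈ F),
    Filter.limsup (fun n : ℕ => ENNReal.ofReal (Real.log (sepNum T n ε
      {x : X | ∃ h : IsProbabilityMeasure (empMeas T n x),
        (⟨empMeas T n x, h⟩ : ProbabilityMeasure X) ∈ F})) / (n : ℝ≥0∞)) Filter.atTop

/-- Partition entropy `H_μ(P) = Σ_{A∈P} -μ(A) log μ(A)`. -/
noncomputable def entP [MeasurableSpace X] (μ : Measure X) (P : Finset (Set X)) : ℝ≥0∞ :=
  ∑ A ∈ P, ENNReal.ofReal (-((μ A).toReal * Real.log ((μ A).toReal)))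

/-- The join `P^n = ∨_{j=0}^{n-1} T^{-j} P`. -/
noncomputable def joinN (T : X → X) (P : Finset (Set X)) (n : ℕ) : Finset (Set X) :=
  letI : DecidableEq (Set X) := Classical.decEq _
  (Fintype.piFinset (fun _ : Fin n => P)).image (fun f => ⋂ j : Fin n, T^[(j : ℕ)] ⁻¹' f j)

/-- `h_μ(T,P) = lim_n H_μ(P^n)/n` (the limit exists and equals the liminf). -/
noncomputable def entRate [MeasurableSpace X] (T : X → X) (μ : Measure X)
    (P : Finset (Set X)) : ℝ≥0∞ :=
  Filter.liminf (fun n : ℕ => entP μ (joinN T P n) / (n : ℝ≥0∞)) Filter.atTop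

/-- `inf { h_μ(T,P) : P a finite Borel partition with diam P ≤ ε }`. -/
noncomputable def infEntRate [PseudoMetricSpace X] [MeasurableSpace X] (T : X → X)
    (μ : Measure X) (ε : ℝ) : ℝ≥0∞ :=
  ⨅ (P : Finset (Set X)) (_ : IsFinPartition P) (_ : ∀ s ∈ P, Metric.diam s ≤ ε),
    entRate T μ P

/-- Kolmogorov–Sinai entropy `h_μ(T)`. -/
noncomputable def ksEntropy [MeasurableSpace X] (T : X → X) (μ : Measure X) : ℝ≥0∞ :=
  ⨆ (P : Finset (Set X)) (_ : IsFinPartition P), entRate T μ P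

/-- A finite open cover. -/
def IsFinOpenCover [TopologicalSpace X] (α : Finset (Set X)) : Prop :=
  (∀ A ∈ α, IsOpen A) ∧ ⋃₀ (α : Set (Set X)) = Set.univ

/-- `ord(β) = max_x #{B ∈ β : x ∈ B} - 1`. -/
noncomputable def ordCover (β : Finset (Set X)) : ℕ :=
  sSup {k | ∃ x : X, Nat.card {B : Set X // B ∈ β ∧ x ∈ B} = k} - 1

/-- `D(α) = min_{β ≻ α} ord(β)`, over finite open covers `β` refining `α`. -/
noncomputable def Dcover [TopologicalSpace X] (α : Finset (Set X)) : ℕ :=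
  sInf {k | ∃ β : Finset (Set X), IsFinOpenCover β ∧ (∀ B ∈ β, ∃ A ∈ α, B ⊆ A) ∧
    ordCover β = k}

/-- Mean (topological) dimension `mdim(X,T) = sup_α lim_n D(α^n)/n`. -/
noncomputable def mdimTop [TopologicalSpace X] (T : X → X) : ℝ≥0∞ :=
  ⨆ (α : Finset (Set X)) (_ : IsFinOpenCover α),
    Filter.liminf (fun n : ℕ => (Dcover (joinN T α n) : ℝ≥0∞) / (n : ℝ≥0∞)) Filter.atTop

/-- The marker property for a homeomorphism. -/
def MarkerProperty [TopologicalSpace X] (T : X ≃ₜ X) : Prop :=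
  ∀ N : ℕ, 0 < N → ∃ U : Set X, IsOpen U ∧
    (∀ n : ℕ, 1 ≤ n → n ≤ N → U ∩ (⇑T)^[n] '' U = ∅) ∧
    ⋃ n : ℤ, ⇑(T.toEquiv ^ n) '' U = Set.univ

/-- Upper dimension `limsup_{ε→0} F(μ,ε)/log(1/ε)` associated with a candidate `F`. -/
noncomputable def dimFUpper [MeasurableSpace X] (F : Measure X → ℝ → ℝ≥0∞)
    (μ : Measure X) : ℝ≥0∞ :=
  Filter.limsup (fun ε : ℝ => F μ ε / ENNReal.ofReal (Real.log (1 / ε)))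
    (nhdsWithin 0 (Set.Ioi 0))

/-- Lower dimension `liminf_{ε→0} F(μ,ε)/log(1/ε)` associated with a candidate `F`. -/
noncomputable def dimFLower [MeasurableSpace X] (F : Measure X → ℝ → ℝ≥0∞)
    (μ : Measure X) : ℝ≥0∞ :=
  Filter.liminf (fun ε : ℝ => F μ ε / ENNReal.ofReal (Real.log (1 / ε)))
    (nhdsWithin 0 (Set.Ioi 0))

/-- A candidate function: for each invariant probability measure `μ`, `F(μ,·)` is
non-decreasing as `ε` decreases, and `F(μ,ε) → h_μ(T)` as `ε → 0⁺`. -/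
def IsCandidate [MeasurableSpace X] (T : X → X) (F : Measure X → ℝ → ℝ≥0∞) : Prop :=
  ∀ μ : Measure X, IsProbabilityMeasure μ → MeasurePreserving T μ μ →
    (∀ ε₁ ε₂ : ℝ, 0 < ε₁ → ε₁ ≤ ε₂ → F μ ε₂ ≤ F μ ε₁) ∧
    Filter.Tendsto (F μ) (nhdsWithin 0 (Set.Ioi 0)) (nhds (ksEntropy T μ))

end MMD

open MMD

/-!
Upper bound on the rate: coding a point by the orbit of a nearby point of a minimal
`(n, ε)`-spanning set makes no errors, and its mutual information is at most the logarithm of the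
size of the set, so `R_{μ,L∞}(ε)` never exceeds the growth rate of spanning sets.

Lower bound: replace the error constraint by a penalty. For `θ > 0` let `J(μ)` be the infimum, over
block lengths and finite channels, of the mutual information plus `θ` times the expected number of
errors, per unit of time, where errors are counted by a continuous ramp. As an infimum of
continuous functions of `μ`, `J` is upper semicontinuous; it is also convex on invariant measures,
because coding a mixture with the channels of its components costs at most a bounded amount of
extra information per block, which is negligible for long blocks. Hence the maximum of `J` over the
invariant measures is attained at an ergodic measure. Take an invariant limit of orbit averages of
the uniform measures on maximal `(n, 6ε)`-separated sets: a channel for such a uniform measure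
must, as in Fano's inequality, carry nearly the logarithm of the size of the set, so `J` of the
limit is at least the growth rate at scale `6ε`, up to an error vanishing as `θ → ∞`. Finally
`J(μ) - θs ≤ R_{μ,L∞}(ε,s)`; let `s → 0`, then `θ → ∞`. Passing from `ε` to `6ε` does not change
the asymptotics of `log (1/ε)`.
-/

namespace MMD

open Real (negMulLog)
open scoped NNReal

universe u

section Entropy

variable {ι κ : Type*}

lemma negMulLog_le_one {t : ℝ} (ht : 0 ≤ t) : negMulLog t ≤ 1 :=
  (Real.negMulLog_le_one_sub_self ht).trans (by linarith)

lemma negMulLog_le_neg_mul_log_add {p q : ℝ} (hp : 0 ≤ p) (hq : 0 ≤ q) (hpq : q = 0 → p = 0) :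
    negMulLog p ≤ -(p * Real.log q) + (q - p) := by
  rcases hp.eq_or_lt with rfl | hp
  · simpa using hq
  · have hq : 0 < q := hq.lt_of_ne fun h => hp.ne' (hpq h.symm)
    have h := mul_le_mul_of_nonneg_left (Real.log_le_sub_one_of_pos (div_pos hq hp)) hp.le
    rw [Real.log_div hq.ne' hp.ne', mul_sub, mul_sub, mul_div_cancel₀ _ hp.ne'] at h
    rw [negMulLog]
    linarith

lemma sum_negMulLog_le_neg_sum_mul_log {s : Finset ι} {p q : ι → ℝ} (hp : ∀ i ∈ s, 0 ≤ p i)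
    (hq : ∀ i ∈ s, 0 ≤ q i) (hpq : ∀ i ∈ s, q i = 0 → p i = 0)
    (hsum : ∑ i ∈ s, q i ≤ ∑ i ∈ s, p i) :
    ∑ i ∈ s, negMulLog (p i) ≤ -∑ i ∈ s, p i * Real.log (q i) := by
  have h := Finset.sum_le_sum fun i hi =>
    negMulLog_le_neg_mul_log_add (hp i hi) (hq i hi) (hpq i hi)
  rw [Finset.sum_add_distrib, Finset.sum_sub_distrib, Finset.sum_neg_distrib] at h
  linarith

lemma sum_negMulLog_le_add_of_sum_eq_one [Fintype ι] [Fintype κ] {r : ι → κ → ℝ}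
    (hr : ∀ i k, 0 ≤ r i k) (hsum : ∑ i, ∑ k, r i k = 1) :
    ∑ i, ∑ k, negMulLog (r i k) ≤
      ∑ i, negMulLog (∑ k, r i k) + ∑ k, negMulLog (∑ i, r i k) := by
  set p : ι → ℝ := fun i => ∑ k, r i k
  set q : κ → ℝ := fun k => ∑ i, r i k
  have hp : ∀ i k, p i = 0 → r i k = 0 := fun i k h =>
    (Finset.sum_eq_zero_iff_of_nonneg fun k _ => hr i k).1 h k (Finset.mem_univ k)
  have hq : ∀ i k, q k = 0 → r i k = 0 := fun i k h =>
    (Finset.sum_eq_zero_iff_of_nonneg fun i _ => hr i k).1 h i (Finset.mem_univ i)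
  have gibbs := sum_negMulLog_le_neg_sum_mul_log (s := Finset.univ)
    (p := fun a : ι × κ => r a.1 a.2) (q := fun a => p a.1 * q a.2) (fun a _ => hr _ _)
    (fun a _ => mul_nonneg (Finset.sum_nonneg fun k _ => hr _ k)
      (Finset.sum_nonneg fun i _ => hr i _))
    (fun a _ h => (mul_eq_zero.1 h).elim (hp _ _) (hq _ _))
    (by
      have hq_sum : ∑ k, q k = 1 := by rw [← hsum, Finset.sum_comm]
      simp only [Fintype.sum_prod_type, ← Finset.mul_sum, hq_sum, mul_one, p, le_refl])
  have split_log : ∀ i k, r i k * Real.log (p i * q k)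
      = r i k * Real.log (p i) + r i k * Real.log (q k) := by
    intro i k
    by_cases h : r i k = 0
    · simp [h]
    · rw [Real.log_mul (mt (hp i k) h) (mt (hq i k) h), mul_add]
  simp only [Fintype.sum_prod_type, split_log, Finset.sum_add_distrib, ← Finset.sum_mul] at gibbs
  rw [Finset.sum_comm (f := fun i k => r i k * Real.log (q k))] at gibbs
  simp only [← Finset.sum_mul] at gibbs
  simpa only [negMulLog, neg_mul, Finset.sum_neg_distrib, neg_add] using gibbs

lemma sum_negMulLog_mul [Fintype ι] {p : ι → ℝ} (hp : ∑ i, p i = 1) (t : ℝ) :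
    ∑ i, negMulLog (t * p i) = negMulLog t + t * ∑ i, negMulLog (p i) := by
  simp only [Real.negMulLog_mul, Finset.sum_add_distrib, ← Finset.sum_mul, ← Finset.mul_sum, hp,
    one_mul]

end Entropy

section Channel

variable {Ω Ω' β γ : Type*} [MeasurableSpace Ω] [MeasurableSpace Ω'] [Fintype β] [Fintype γ]

/-- A noisy channel (Markov kernel) from `Ω` to a finite alphabet: `φ b x` is the probability that
the input `x` is sent to the letter `b`. -/
structure IsChannel (φ : β → Ω → ℝ) : Prop where
  measurable : ∀ b, Measurable (φ b)
  nonneg : ∀ b x, 0 ≤ φ b x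
  sum_eq_one : ∀ x, ∑ b, φ b x = 1

/-- The mutual information between an input of law `μ` and the output of the channel `φ`, written
as output entropy minus conditional entropy. -/
def channelInfo (μ : Measure Ω) (φ : β → Ω → ℝ) : ℝ :=
  ∑ b, (negMulLog (∫ x, φ b x ∂μ) - ∫ x, negMulLog (φ b x) ∂μ)

/-- The expected cost of sending an input of law `μ` through the channel `φ`, when `c b x` is the
cost of sending `x` to `b`. -/
def expectedCost (μ : Measure Ω) (φ c : β → Ω → ℝ) : ℝ :=
  ∑ b, ∫ x, φ b x * c b x ∂μ

namespace IsChannel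

variable {φ : β → Ω → ℝ} (hφ : IsChannel φ)
include hφ

lemma le_one (b : β) (x : Ω) : φ b x ≤ 1 :=
  hφ.sum_eq_one x ▸ Finset.single_le_sum (f := fun b => φ b x) (fun i _ => hφ.nonneg i x)
    (Finset.mem_univ b)

lemma norm_le_one (b : β) (x : Ω) : ‖φ b x‖ ≤ 1 := by
  rw [Real.norm_of_nonneg (hφ.nonneg b x)]
  exact hφ.le_one b x

lemma norm_negMulLog_le_one (b : β) (x : Ω) : ‖negMulLog (φ b x)‖ ≤ 1 := by
  rw [Real.norm_of_nonneg (Real.negMulLog_nonneg (hφ.nonneg b x) (hφ.le_one b x))]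
  exact negMulLog_le_one (hφ.nonneg b x)

lemma measurable_negMulLog (b : β) : Measurable fun x => negMulLog (φ b x) :=
  Real.continuous_negMulLog.measurable.comp (hφ.measurable b)

lemma comp {f : Ω' → Ω} (hf : Measurable f) : IsChannel fun b x => φ b (f x) :=
  ⟨fun b => (hφ.measurable b).comp hf, fun b x => hφ.nonneg b (f x), fun x => hφ.sum_eq_one (f x)⟩

lemma prod {ψ : γ → Ω → ℝ} (hψ : IsChannel ψ) :
    IsChannel fun (a : β × γ) x => φ a.1 x * ψ a.2 x :=
  ⟨fun a => (hφ.measurable _).mul (hψ.measurable _),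
    fun a x => mul_nonneg (hφ.nonneg _ _) (hψ.nonneg _ _),
    fun x => by
      simp only [Fintype.sum_prod_type, ← Finset.mul_sum, hψ.sum_eq_one, hφ.sum_eq_one, mul_one]⟩

lemma mix {ψ : γ → Ω → ℝ} (hψ : IsChannel ψ) {v w : Ω → ℝ≥0} (hv : Measurable v)
    (hw : Measurable w) (hvw : ∀ x, v x + w x = 1) :
    IsChannel (Sum.elim (fun b x => v x * φ b x) fun b x => w x * ψ b x) where
  measurable := by
    rintro (b | b)
    exacts [hv.coe_nnreal_real.mul (hφ.measurable b), hw.coe_nnreal_real.mul (hψ.measurable b)]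
  nonneg := by
    rintro (b | b) x
    exacts [mul_nonneg (v x).2 (hφ.nonneg b x), mul_nonneg (w x).2 (hψ.nonneg b x)]
  sum_eq_one x := by
    simp only [Fintype.sum_sum_type, Sum.elim_inl, Sum.elim_inr, ← Finset.mul_sum, hφ.sum_eq_one,
      hψ.sum_eq_one, mul_one, ← NNReal.coe_add, hvw, NNReal.coe_one]

variable (μ : Measure Ω)

lemma integrable [IsFiniteMeasure μ] (b : β) : Integrable (φ b) μ :=
  .of_bound (hφ.measurable b).aestronglyMeasurable 1 (.of_forall (hφ.norm_le_one b))

lemma integrable_negMulLog [IsFiniteMeasure μ] (b : β) :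
    Integrable (fun x => negMulLog (φ b x)) μ :=
  .of_bound (hφ.measurable_negMulLog b).aestronglyMeasurable 1
    (.of_forall (hφ.norm_negMulLog_le_one b))

variable {μ} in
lemma integrable_mul {g : Ω → ℝ} (hg : Integrable g μ) (b : β) :
    Integrable (fun x => φ b x * g x) μ :=
  hg.bdd_mul (hφ.measurable b).aestronglyMeasurable (.of_forall (hφ.norm_le_one b))

lemma expectedCost_nonneg {c : β → Ω → ℝ} (hc : ∀ b x, 0 ≤ c b x) : 0 ≤ expectedCost μ φ c :=
  Finset.sum_nonneg fun b _ => integral_nonneg fun x => mul_nonneg (hφ.nonneg b x) (hc b x)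

variable {μ} in
lemma expectedCost_mono {c d : β → Ω → ℝ} (hc : ∀ b, Integrable (c b) μ)
    (hd : ∀ b, Integrable (d b) μ) (hcd : ∀ b x, c b x ≤ d b x) :
    expectedCost μ φ c ≤ expectedCost μ φ d :=
  Finset.sum_le_sum fun b _ => integral_mono (hφ.integrable_mul (hc b) b)
    (hφ.integrable_mul (hd b) b) fun x => mul_le_mul_of_nonneg_left (hcd b x) (hφ.nonneg b x)

lemma sum_integral_eq_one [IsProbabilityMeasure μ] : ∑ b, ∫ x, φ b x ∂μ = 1 := by
  rw [← integral_finsetSum _ fun b _ => hφ.integrable μ b]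
  simp [hφ.sum_eq_one]

lemma channelInfo_nonneg [IsProbabilityMeasure μ] : 0 ≤ channelInfo μ φ :=
  Finset.sum_nonneg fun b _ => sub_nonneg.2 <|
    Real.concaveOn_negMulLog.le_map_integral Real.continuous_negMulLog.continuousOn isClosed_Ici
      (.of_forall fun x => hφ.nonneg b x) (hφ.integrable μ b) (hφ.integrable_negMulLog μ b)

lemma channelInfo_map {μ : Measure Ω'} {f : Ω' → Ω} (hf : Measurable f) :
    channelInfo (μ.map f) φ = channelInfo μ fun b x => φ b (f x) :=
  Finset.sum_congr rfl fun b _ => by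
    rw [integral_map hf.aemeasurable (hφ.measurable b).aestronglyMeasurable,
      integral_map hf.aemeasurable (hφ.measurable_negMulLog b).aestronglyMeasurable]

lemma expectedCost_map {μ : Measure Ω'} {f : Ω' → Ω} (hf : Measurable f) {c : β → Ω → ℝ}
    (hc : ∀ b, Measurable (c b)) :
    expectedCost (μ.map f) φ c = expectedCost μ (fun b x => φ b (f x)) fun b x => c b (f x) :=
  Finset.sum_congr rfl fun b _ =>
    integral_map hf.aemeasurable ((hφ.measurable b).mul (hc b)).aestronglyMeasurable

end IsChannel

end Channel

section ChannelOperations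

variable {Ω β γ : Type*} [MeasurableSpace Ω] [Fintype β] [Fintype γ]

namespace IsChannel

variable {φ : β → Ω → ℝ} {ψ : γ → Ω → ℝ} (hφ : IsChannel φ) (hψ : IsChannel ψ)
include hφ hψ

lemma channelInfo_prod_le (μ : Measure Ω) [IsProbabilityMeasure μ] :
    channelInfo μ (fun (a : β × γ) x => φ a.1 x * ψ a.2 x) ≤
      channelInfo μ φ + channelInfo μ ψ := by
  have int_prod : ∀ b c, Integrable (fun x => φ b x * ψ c x) μ :=
    fun b c => (hφ.prod hψ).integrable μ (b, c)
  have marginal_fst : ∀ b, ∑ c, ∫ x, φ b x * ψ c x ∂μ = ∫ x, φ b x ∂μ := fun b => by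
    rw [← integral_finsetSum _ fun c _ => int_prod b c]
    simp only [← Finset.mul_sum, hψ.sum_eq_one, mul_one]
  have marginal_snd : ∀ c, ∑ b, ∫ x, φ b x * ψ c x ∂μ = ∫ x, ψ c x ∂μ := fun c => by
    rw [← integral_finsetSum _ fun b _ => int_prod b c]
    simp only [← Finset.sum_mul, hφ.sum_eq_one, one_mul]
  have output_entropy := sum_negMulLog_le_add_of_sum_eq_one
    (r := fun b c => ∫ x, φ b x * ψ c x ∂μ)
    (fun b c => integral_nonneg fun x => (hφ.prod hψ).nonneg (b, c) x)
    (by simp only [marginal_fst, hφ.sum_integral_eq_one])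
  have cond_entropy : ∑ a : β × γ, ∫ x, negMulLog (φ a.1 x * ψ a.2 x) ∂μ =
      ∑ b, ∫ x, negMulLog (φ b x) ∂μ + ∑ c, ∫ x, negMulLog (ψ c x) ∂μ := by
    rw [← integral_finsetSum _ fun a _ => (hφ.prod hψ).integrable_negMulLog μ a,
      ← integral_finsetSum _ fun b _ => hφ.integrable_negMulLog μ b,
      ← integral_finsetSum _ fun c _ => hψ.integrable_negMulLog μ c,
      ← integral_add (integrable_finsetSum _ fun b _ => hφ.integrable_negMulLog μ b)
        (integrable_finsetSum _ fun c _ => hψ.integrable_negMulLog μ c)]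
    simp only [Fintype.sum_prod_type, Real.negMulLog_mul, Finset.sum_add_distrib,
      ← Finset.sum_mul, ← Finset.mul_sum, hψ.sum_eq_one, hφ.sum_eq_one, one_mul]
  simp only [marginal_fst, marginal_snd] at output_entropy
  simp only [channelInfo, Finset.sum_sub_distrib, cond_entropy]
  rw [Fintype.sum_prod_type]
  linarith

lemma expectedCost_prod {μ : Measure Ω} {c : β → Ω → ℝ} {d : γ → Ω → ℝ}
    (hc : ∀ b, Integrable (c b) μ) (hd : ∀ b, Integrable (d b) μ) :
    expectedCost μ (fun (a : β × γ) x => φ a.1 x * ψ a.2 x) (fun a x => c a.1 x + d a.2 x) =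
      expectedCost μ φ c + expectedCost μ ψ d := by
  have int_fst := fun b => hφ.integrable_mul (hc b) b
  have int_snd := fun b => hψ.integrable_mul (hd b) b
  have int_prod : ∀ a : β × γ,
      Integrable (fun x => φ a.1 x * ψ a.2 x * (c a.1 x + d a.2 x)) μ :=
    fun a => (hφ.prod hψ).integrable_mul ((hc a.1).add (hd a.2)) a
  have expand : ∀ b b' x, φ b x * ψ b' x * (c b x + d b' x)
      = ψ b' x * (φ b x * c b x) + φ b x * (ψ b' x * d b' x) := fun b b' x => by ring
  simp only [expectedCost]
  rw [← integral_finsetSum _ fun a _ => int_prod a, ← integral_finsetSum _ fun b _ => int_fst b,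
    ← integral_finsetSum _ fun b _ => int_snd b,
    ← integral_add (integrable_finsetSum _ fun b _ => int_fst b)
      (integrable_finsetSum _ fun b _ => int_snd b)]
  simp only [Fintype.sum_prod_type, expand, Finset.sum_add_distrib, ← Finset.sum_mul,
    ← Finset.mul_sum, hψ.sum_eq_one, hφ.sum_eq_one, one_mul]

end IsChannel

end ChannelOperations

section Mixture

variable {Ω β ι : Type*} [MeasurableSpace Ω] [Fintype β]

lemma integral_mul_of_withDensity_eq_smul {μ μ₁ : Measure Ω} {w : Ω → ℝ≥0} (hw : Measurable w)
    {t : ℝ≥0} (h : μ.withDensity (fun x => w x) = t • μ₁) (f : Ω → ℝ) :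
    ∫ x, w x * f x ∂μ = t * ∫ x, f x ∂μ₁ := by
  have := integral_withDensity_eq_integral_smul (μ := μ) hw f
  rwa [h, integral_smul_nnreal_measure, eq_comm] at this

lemma exists_withDensity_eq_smul_of_add {μ₁ μ₂ : Measure Ω} [IsFiniteMeasure μ₁]
    [IsFiniteMeasure μ₂] (s t : ℝ≥0) :
    ∃ v w : Ω → ℝ≥0, Measurable v ∧ Measurable w ∧ (∀ x, v x + w x = 1) ∧
      (s • μ₁ + t • μ₂).withDensity (fun x => v x) = s • μ₁ ∧
      (s • μ₁ + t • μ₂).withDensity (fun x => w x) = t • μ₂ := by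
  set μ := s • μ₁ + t • μ₂
  have hle : s • μ₁ ≤ μ := Measure.le_add_right le_rfl
  let v : Ω → ℝ≥0 := fun x => min 1 ((s • μ₁).rnDeriv μ x).toNNReal
  have hv : Measurable v :=
    measurable_const.min (Measure.measurable_rnDeriv _ _).ennreal_toNNReal
  have hvw : ∀ x, v x + (1 - v x) = 1 := fun x => add_tsub_cancel_of_le (min_le_left _ _)
  have density_fst : μ.withDensity (fun x => v x) = s • μ₁ := by
    rw [← Measure.withDensity_rnDeriv_eq _ _ (Measure.absolutelyContinuous_of_le hle)]
    refine withDensity_congr_ae ?_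
    filter_upwards [Measure.rnDeriv_le_one_of_le hle] with x hx
    have hx_top : (s • μ₁).rnDeriv μ x ≠ ∞ := (hx.trans_lt ENNReal.one_lt_top).ne
    rw [ENNReal.coe_min, ENNReal.coe_toNNReal hx_top, ENNReal.coe_one]
    exact min_eq_right hx
  refine ⟨v, fun x => 1 - v x, hv, measurable_const.sub hv, hvw, density_fst, ?_⟩
  have total : μ.withDensity (fun x => v x) + μ.withDensity (fun x => ↑(1 - v x)) = μ := by
    rw [← withDensity_add_left hv.coe_nnreal_ennreal]
    convert! withDensity_one (μ := μ) using 2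
    ext x
    exact congrArg ((↑) : ℝ≥0 → ℝ≥0∞) (hvw x)
  rw [density_fst] at total
  exact Measure.add_right_inj _ _ _ |>.1 total

lemma expectedCost_smul_of_withDensity {μ μ₁ : Measure Ω} {w : Ω → ℝ≥0} (hw : Measurable w)
    {t : ℝ≥0} (h : μ.withDensity (fun x => w x) = t • μ₁) (φ c : β → Ω → ℝ) :
    expectedCost μ (fun b x => w x * φ b x) c = t * expectedCost μ₁ φ c := by
  simp only [expectedCost, mul_assoc, integral_mul_of_withDensity_eq_smul hw h, Finset.mul_sum]

namespace IsChannel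

variable {φ : β → Ω → ℝ} (hφ : IsChannel φ)
include hφ

lemma channelInfo_smul_le_of_withDensity {μ μ₁ : Measure Ω} [IsFiniteMeasure μ]
    [IsProbabilityMeasure μ₁] {w : Ω → ℝ≥0} (hw : Measurable w) (hw1 : ∀ x, w x ≤ 1)
    {t : ℝ≥0} (h : μ.withDensity (fun x => w x) = t • μ₁) :
    channelInfo μ (fun b x => w x * φ b x) ≤ 1 + t * channelInfo μ₁ φ := by
  have hw_real : Measurable fun x => (w x : ℝ) := hw.coe_nnreal_real
  have output_entropy : ∑ b, negMulLog (∫ x, w x * φ b x ∂μ)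
      = negMulLog t + t * ∑ b, negMulLog (∫ x, φ b x ∂μ₁) := by
    simp only [integral_mul_of_withDensity_eq_smul hw h,
      sum_negMulLog_mul (hφ.sum_integral_eq_one μ₁)]
  have cond_entropy : ∀ b,
      t * ∫ x, negMulLog (φ b x) ∂μ₁ ≤ ∫ x, negMulLog (w x * φ b x) ∂μ := by
    intro b
    rw [← integral_mul_of_withDensity_eq_smul hw h]
    have h0 : ∀ x, 0 ≤ w x * φ b x := fun x => mul_nonneg (w x).2 (hφ.nonneg b x)
    have h1 : ∀ x, w x * φ b x ≤ 1 := fun x =>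
      mul_le_one₀ (hw1 x) (hφ.nonneg b x) (hφ.le_one b x)
    have hmeas : Measurable fun x => negMulLog (w x * φ b x) :=
      Real.continuous_negMulLog.measurable.comp (hw_real.mul (hφ.measurable b))
    refine integral_mono ((hφ.integrable_negMulLog μ b).bdd_mul (c := 1)
      hw_real.aestronglyMeasurable (.of_forall fun x => ?_))
      (.of_bound hmeas.aestronglyMeasurable 1 (.of_forall fun x => ?_)) fun x => ?_
    · exact (Real.norm_of_nonneg (w x).2).trans_le (hw1 x)
    · rw [Real.norm_of_nonneg (Real.negMulLog_nonneg (h0 x) (h1 x))]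
      exact negMulLog_le_one (h0 x)
    · simp only [Real.negMulLog_mul (w x : ℝ)]
      exact le_add_of_nonneg_left
        (mul_nonneg (hφ.nonneg b x) (Real.negMulLog_nonneg (w x).2 (hw1 x)))
  have := Finset.sum_le_sum fun b (_ : b ∈ Finset.univ) => cond_entropy b
  rw [← Finset.mul_sum] at this
  simp only [channelInfo, Finset.sum_sub_distrib, output_entropy, mul_sub]
  linarith [negMulLog_le_one t.coe_nonneg]

lemma sum_mul_channelInfo_le {s : Finset ι} {w : ι → ℝ≥0} (hw : ∑ i ∈ s, w i = 1)
    (ν : ι → Measure Ω) [∀ i, IsProbabilityMeasure (ν i)] :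
    ∑ i ∈ s, w i * channelInfo (ν i) φ ≤ channelInfo (∑ i ∈ s, w i • ν i) φ := by
  simp only [channelInfo, Finset.mul_sum]
  rw [Finset.sum_comm]
  refine Finset.sum_le_sum fun b _ => ?_
  have jensen := Real.concaveOn_negMulLog.le_map_sum (t := s) (w := fun i => (w i : ℝ))
    (p := fun i => ∫ x, φ b x ∂ν i) (fun i _ => (w i).2) (mod_cast hw)
    fun i _ => mem_Ici.2 (integral_nonneg fun x => hφ.nonneg b x)
  rw [integral_finsetSum_measure fun i _ => (hφ.integrable (ν i) b).smul_measure_nnreal,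
    integral_finsetSum_measure fun i _ => (hφ.integrable_negMulLog (ν i) b).smul_measure_nnreal]
  simp only [integral_smul_nnreal_measure, mul_sub, Finset.sum_sub_distrib]
  exact sub_le_sub_right jensen _

lemma expectedCost_sum_smul {s : Finset ι} {w : ι → ℝ≥0} {ν : ι → Measure Ω} {c : β → Ω → ℝ}
    (hc : ∀ i b, Integrable (c b) (ν i)) :
    expectedCost (∑ i ∈ s, w i • ν i) φ c = ∑ i ∈ s, w i * expectedCost (ν i) φ c := by
  simp only [expectedCost, Finset.mul_sum]
  rw [Finset.sum_comm]
  refine Finset.sum_congr rfl fun b _ => ?_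
  rw [integral_finsetSum_measure fun i _ => (hφ.integrable_mul (hc i b) b).smul_measure_nnreal]
  simp only [integral_smul_nnreal_measure, NNReal.smul_def, smul_eq_mul]

end IsChannel

end Mixture

section Fano

variable {Ω β : Type*} [MeasurableSpace Ω] [MeasurableSingletonClass Ω] [Fintype β]

open ProbabilityTheory (uniformOn)

lemma integral_uniformOn_finset (E : Finset Ω) (f : Ω → ℝ) :
    ∫ x, f x ∂uniformOn (E : Set Ω) = (E.card : ℝ)⁻¹ * ∑ x ∈ E, f x := by
  rw [uniformOn, ProbabilityTheory.cond, integral_smul_measure, setIntegral_finset]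
  · simp [Measure.real]
  · rw [← (E : Set Ω).biUnion_of_singleton]
    simp [integrableOn_finset_iUnion]

-- Gibbs' inequality against the tilted measure of density proportional to `exp (-c)` on `E`.
lemma sum_negMulLog_le_of_sum_exp_neg_le {Ω : Type*} {E : Finset Ω} {f c : Ω → ℝ} {Z : ℝ}
    (hf : ∀ x, 0 ≤ f x) (hZ0 : 0 < Z) (hZ : ∑ x ∈ E, Real.exp (-c x) ≤ Z) :
    ∑ x ∈ E, negMulLog (f x) ≤
      negMulLog (∑ x ∈ E, f x) + ∑ x ∈ E, f x * c x + (∑ x ∈ E, f x) * Real.log Z := by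
  set S := ∑ x ∈ E, f x
  have hS : S = 0 → ∀ x ∈ E, f x = 0 := (Finset.sum_eq_zero_iff_of_nonneg fun x _ => hf x).1
  have hS0 : 0 ≤ S := Finset.sum_nonneg fun x _ => hf x
  have gibbs := sum_negMulLog_le_neg_sum_mul_log (s := E) (p := f)
    (q := fun x => S * (Real.exp (-c x) / Z)) (fun x _ => hf x) (fun x _ => by positivity)
    (fun x hx h => hS ((mul_eq_zero.1 h).resolve_right (by positivity)) x hx)
    (by
      rw [← Finset.mul_sum, ← Finset.sum_div]
      exact mul_le_of_le_one_right hS0 ((div_le_one hZ0).2 hZ))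
  have log_tilt : ∀ x ∈ E, f x * Real.log (S * (Real.exp (-c x) / Z))
      = f x * Real.log S - f x * c x - f x * Real.log Z := by
    intro x hx
    by_cases h : S = 0
    · simp [hS h x hx]
    · rw [Real.log_mul h (by positivity), Real.log_div (by positivity) hZ0.ne', Real.log_exp]
      ring
  rw [Finset.sum_congr rfl log_tilt] at gibbs
  simp only [Finset.sum_sub_distrib, ← Finset.sum_mul] at gibbs
  rw [negMulLog]
  linarith

namespace IsChannel

variable {φ : β → Ω → ℝ} (hφ : IsChannel φ)
include hφ

lemma log_card_le_channelInfo_add {E : Finset Ω} (hE : E.Nonempty) {c : β → Ω → ℝ} {Z : ℝ}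
    (hZ0 : 0 < Z) (hZ : ∀ b, ∑ x ∈ E, Real.exp (-c b x) ≤ Z) :
    Real.log E.card ≤ channelInfo (uniformOn (E : Set Ω)) φ
      + expectedCost (uniformOn (E : Set Ω)) φ c + Real.log Z := by
  have := ProbabilityTheory.isProbabilityMeasure_uniformOn E.finite_toSet hE
  have hN : (0 : ℝ) < E.card := mod_cast hE.card_pos
  have letter_bound : ∀ b, (∫ x, φ b x ∂uniformOn (E : Set Ω)) * (Real.log E.card - Real.log Z) ≤
      negMulLog (∫ x, φ b x ∂uniformOn (E : Set Ω))
        - ∫ x, negMulLog (φ b x) ∂uniformOn (E : Set Ω)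
        + ∫ x, φ b x * c b x ∂uniformOn (E : Set Ω) := by
    intro b
    have h := mul_le_mul_of_nonneg_left
      (sum_negMulLog_le_of_sum_exp_neg_le (hφ.nonneg b) hZ0 (hZ b)) (inv_nonneg.2 hN.le)
    simp only [integral_uniformOn_finset, Real.negMulLog_mul]
    have : negMulLog (E.card : ℝ)⁻¹ = (E.card : ℝ)⁻¹ * Real.log E.card := by
      rw [negMulLog, Real.log_inv]; ring
    rw [this]
    linarith
  have h := Finset.sum_le_sum fun b (_ : b ∈ Finset.univ) => letter_bound b
  rw [← Finset.sum_mul, hφ.sum_integral_eq_one, one_mul, Finset.sum_add_distrib] at h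
  simp only [channelInfo, expectedCost]
  linarith

end IsChannel

end Fano

section Normalize

variable {Ω β : Type*} [Fintype β] [Nonempty β] {f : β → Ω → ℝ}

/-- The channel proportional to the positive scores `f b x`, used to turn continuous
approximations of a channel into continuous channels. -/
def normalize {Ω β : Type*} [Fintype β] (f : β → Ω → ℝ) (b : β) (x : Ω) : ℝ :=
  f b x / ∑ b', f b' x

lemma continuous_normalize [TopologicalSpace Ω] (hf : ∀ b, Continuous (f b))
    (hpos : ∀ b x, 0 < f b x) (b : β) : Continuous (normalize f b) :=
  (hf b).div (continuous_finsetSum _ fun b _ => hf b) fun x =>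
    (Finset.sum_pos (fun b _ => hpos b x) Finset.univ_nonempty).ne'

lemma isChannel_normalize [MeasurableSpace Ω] (hf : ∀ b, Measurable (f b))
    (hpos : ∀ b x, 0 < f b x) : IsChannel (normalize f) where
  measurable b := (hf b).div (Finset.measurable_fun_sum _ fun b _ => hf b)
  nonneg b x := div_nonneg (hpos b x).le (Finset.sum_nonneg fun b _ => (hpos b x).le)
  sum_eq_one x := by
    simp only [normalize, ← Finset.sum_div]
    exact div_self (Finset.sum_pos (fun b _ => hpos b x) Finset.univ_nonempty).ne'

end Normalize

section DominatedConvergence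

variable {Ω β : Type*} [MeasurableSpace Ω] [Fintype β] {μ : Measure Ω} {φ : β → Ω → ℝ}
  {g : ℕ → β → Ω → ℝ} (hg : ∀ j, IsChannel (g j))
  (hlim : ∀ b, ∀ᵐ x ∂μ, Tendsto (fun j => g j b x) atTop (𝓝 (φ b x)))
include hg hlim

lemma tendsto_channelInfo [IsFiniteMeasure μ] :
    Tendsto (fun j => channelInfo μ (g j)) atTop (𝓝 (channelInfo μ φ)) := by
  refine tendsto_finsetSum _ fun b _ =>
    ((Real.continuous_negMulLog.tendsto _).comp ?_).sub ?_
  · exact tendsto_integral_of_dominated_convergence (fun _ => 1)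
      (fun j => ((hg j).measurable b).aestronglyMeasurable) (integrable_const _)
      (fun j => .of_forall ((hg j).norm_le_one b)) (hlim b)
  · exact tendsto_integral_of_dominated_convergence (fun _ => 1)
      (fun j => ((hg j).measurable_negMulLog b).aestronglyMeasurable) (integrable_const _)
      (fun j => .of_forall ((hg j).norm_negMulLog_le_one b))
      ((hlim b).mono fun x hx => (Real.continuous_negMulLog.tendsto _).comp hx)

lemma tendsto_expectedCost {c : β → Ω → ℝ} (hc : ∀ b, Integrable (c b) μ) :
    Tendsto (fun j => expectedCost μ (g j) c) atTop (𝓝 (expectedCost μ φ c)) := by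
  refine tendsto_finsetSum _ fun b _ => tendsto_integral_of_dominated_convergence
    (fun x => ‖c b x‖) (fun j => ((hg j).integrable_mul (hc b) b).1) (hc b).norm
    (fun j => .of_forall fun x => ?_) ((hlim b).mono fun x hx => hx.mul_const _)
  rw [norm_mul]
  exact mul_le_of_le_one_left (norm_nonneg _) ((hg j).norm_le_one b x)

end DominatedConvergence

section Continuity

variable {X β : Type*} [MetricSpace X] [MeasurableSpace X] [BorelSpace X] [Fintype β]

lemma exists_continuous_tendsto_ae {μ : Measure X} [IsFiniteMeasure μ] {f : X → ℝ}
    (hf : Integrable f μ) :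
    ∃ g : ℕ → X → ℝ, (∀ j, Continuous (g j)) ∧
      ∀ᵐ x ∂μ, Tendsto (fun j => g j x) atTop (𝓝 (f x)) := by
  have hf_Lp : MemLp f 1 μ := memLp_one_iff_integrable.2 hf
  choose g hg _ using fun j : ℕ => hf_Lp.exists_boundedContinuous_eLpNorm_sub_le
    ENNReal.one_ne_top (ε := ((j + 1 : ℕ) : ℝ≥0∞)⁻¹) (by simp)
  have hlim : Tendsto (fun j => eLpNorm (⇑(g j) - f) 1 μ) atTop (𝓝 0) :=
    tendsto_of_tendsto_of_tendsto_of_le_of_le tendsto_const_nhds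
      (ENNReal.tendsto_inv_nat_nhds_zero.comp (tendsto_add_atTop_nat 1)) (fun _ => zero_le)
      fun j => (eLpNorm_sub_comm _ _ _ _).trans_le (hg j)
  obtain ⟨ns, -, hns⟩ := (tendstoInMeasure_of_tendsto_eLpNorm one_ne_zero
    (fun j => (g j).continuous.aestronglyMeasurable) hf.1 hlim).exists_seq_tendsto_ae
  exact ⟨fun j => g (ns j), fun j => (g (ns j)).continuous, hns⟩

lemma IsChannel.exists_continuous_tendsto_ae {φ : β → X → ℝ} (hφ : IsChannel φ) (μ : Measure X)
    [IsProbabilityMeasure μ] :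
    ∃ g : ℕ → β → X → ℝ, (∀ j, IsChannel (g j)) ∧ (∀ j b, Continuous (g j b)) ∧
      ∀ b, ∀ᵐ x ∂μ, Tendsto (fun j => g j b x) atTop (𝓝 (φ b x)) := by
  choose f hf hlim using fun b => MMD.exists_continuous_tendsto_ae (hφ.integrable μ b)
  let G : ℕ → β → X → ℝ := fun j b x => |f b j x| + 1 / ((j : ℝ) + 1)
  have hG : ∀ j b, Continuous (G j b) := fun j b => (hf b j).abs.add continuous_const
  have hG_pos : ∀ j b x, 0 < G j b x := fun j b x => by positivity
  have : Nonempty β := by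
    by_contra h
    have : IsEmpty β := not_nonempty_iff.1 h
    simpa using hφ.sum_integral_eq_one μ
  refine ⟨fun j => normalize (G j), fun j => isChannel_normalize (fun b => (hG j b).measurable)
    (hG_pos j), fun j => continuous_normalize (hG j) (hG_pos j), fun b => ?_⟩
  filter_upwards [ae_all_iff.2 hlim] with x hx
  have G_lim : ∀ b, Tendsto (fun j => G j b x) atTop (𝓝 (φ b x)) := fun b => by
    have := (hx b).abs.add (tendsto_one_div_add_atTop_nhds_zero_nat (𝕜 := ℝ))
    rwa [abs_of_nonneg (hφ.nonneg b x), add_zero] at this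
  have sum_lim := tendsto_finsetSum Finset.univ fun b _ => G_lim b
  rw [hφ.sum_eq_one x] at sum_lim
  exact div_one (φ b x) ▸ (G_lim b).div sum_lim one_ne_zero

variable [CompactSpace X]

lemma continuous_integral {f : X → ℝ} (hf : Continuous f) :
    Continuous fun μ : ProbabilityMeasure X => ∫ x, f x ∂(μ : Measure X) :=
  ProbabilityMeasure.continuous_integral_continuousMap (⟨f, hf⟩ : C(X, ℝ))

lemma continuous_channelInfo {φ : β → X → ℝ} (hφ : ∀ b, Continuous (φ b)) :
    Continuous fun μ : ProbabilityMeasure X => channelInfo (μ : Measure X) φ :=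
  continuous_finsetSum _ fun b _ =>
    (Real.continuous_negMulLog.comp (continuous_integral (hφ b))).sub
      (continuous_integral (Real.continuous_negMulLog.comp (hφ b)))

lemma continuous_expectedCost {φ c : β → X → ℝ} (hφ : ∀ b, Continuous (φ b))
    (hc : ∀ b, Continuous (c b)) :
    Continuous fun μ : ProbabilityMeasure X => expectedCost (μ : Measure X) φ c :=
  continuous_finsetSum _ fun b _ => continuous_integral ((hφ b).mul (hc b))

end Continuity

section SoftCost

/-- A continuous substitute for the indicator of `{t | 2 * ε < t}`: it vanishes for `t ≤ 2 * ε` and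
equals `1` for `3 * ε ≤ t`. -/
def ramp (ε t : ℝ) : ℝ :=
  max 0 (min 1 ((t - 2 * ε) / ε))

lemma ramp_nonneg (ε t : ℝ) : 0 ≤ ramp ε t :=
  le_max_left _ _

lemma ramp_le_one (ε t : ℝ) : ramp ε t ≤ 1 :=
  max_le zero_le_one (min_le_left _ _)

lemma continuous_ramp (ε : ℝ) : Continuous (ramp ε) := by
  unfold ramp
  fun_prop

lemma ramp_eq_zero {ε t : ℝ} (hε : 0 < ε) (ht : t ≤ 2 * ε) : ramp ε t = 0 :=
  max_eq_left <| (min_le_right _ _).trans <|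
    div_nonpos_of_nonpos_of_nonneg (sub_nonpos.2 ht) hε.le

lemma ramp_eq_one {ε t : ℝ} (hε : 0 < ε) (ht : 3 * ε ≤ t) : ramp ε t = 1 := by
  have : 1 ≤ (t - 2 * ε) / ε := (le_div_iff₀ hε).2 (by linarith)
  rw [ramp, min_eq_left this, max_eq_right zero_le_one]

variable {X : Type*} [MetricSpace X]

/-- The soft number of errors made on the window `W ⊆ ℕ` when `l` is announced as the orbit of
`x`. -/
def softErr (T : X → X) (ε : ℝ) (W : Finset ℕ) (l : ℕ → X) (x : X) : ℝ :=
  ∑ k ∈ W, ramp ε (dist (T^[k] x) (l k))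

lemma softErr_nonneg (T : X → X) (ε : ℝ) (W : Finset ℕ) (l : ℕ → X) (x : X) :
    0 ≤ softErr T ε W l x :=
  Finset.sum_nonneg fun _ _ => ramp_nonneg _ _

lemma softErr_le_card (T : X → X) (ε : ℝ) (W : Finset ℕ) (l : ℕ → X) (x : X) :
    softErr T ε W l x ≤ W.card :=
  (Finset.sum_le_card_nsmul _ _ 1 fun _ _ => ramp_le_one _ _).trans_eq (by simp)

lemma continuous_softErr {T : X → X} (hT : Continuous T) (ε : ℝ) (W : Finset ℕ) (l : ℕ → X) :
    Continuous (softErr T ε W l) :=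
  continuous_finsetSum _ fun k _ =>
    (continuous_ramp ε).comp ((hT.iterate k).dist continuous_const)

lemma softErr_map_add (T : X → X) (ε : ℝ) (W : Finset ℕ) (i : ℕ) (l : ℕ → X) (x : X) :
    softErr T ε (W.map (addRightEmbedding i)) (fun k => l (k - i)) x
      = softErr T ε W l (T^[i] x) := by
  simp only [softErr, Finset.sum_map, addRightEmbedding_apply, Function.iterate_add_apply,
    add_tsub_cancel_right]

lemma softErr_union (T : X → X) (ε : ℝ) {V W : Finset ℕ} (h : Disjoint V W) (l m : ℕ → X) (x : X) :
    softErr T ε (V ∪ W) (fun k => if k ∈ V then l k else m k) x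
      = softErr T ε V l x + softErr T ε W m x := by
  rw [softErr, Finset.sum_union h]
  congr 1
  · exact Finset.sum_congr rfl fun k hk => by rw [if_pos hk]
  · exact Finset.sum_congr rfl fun k hk => by rw [if_neg (Finset.disjoint_right.1 h hk)]

lemma integrable_softErr [MeasurableSpace X] [BorelSpace X] {T : X → X} (hT : Continuous T)
    (ε : ℝ) (W : Finset ℕ) (l : ℕ → X) (μ : Measure X) [IsFiniteMeasure μ] :
    Integrable (softErr T ε W l) μ :=
  .of_bound (continuous_softErr hT ε W l).aestronglyMeasurable W.card <| .of_forall fun x => by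
    rw [Real.norm_of_nonneg (softErr_nonneg T ε W l x)]
    exact softErr_le_card T ε W l x

end SoftCost

section Achievable

variable {X : Type u} [MetricSpace X] [MeasurableSpace X]

/-- Some channel, whose letters `b` announce approximate orbits `L b`, has on the window `W`
information plus `θ` times the expected number of errors at most `v`. This is the Lagrangian form
of the rate distortion problem. -/
def Achievable (T : X → X) (ε θ : ℝ) (μ : Measure X) (W : Finset ℕ) (v : ℝ) : Prop :=
  ∃ (β : Type u) (_ : Fintype β) (φ : β → X → ℝ) (L : β → ℕ → X), IsChannel φ ∧
    channelInfo μ φ + expectedCost μ φ (fun b x => θ * softErr T ε W (L b) x) ≤ v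

namespace Achievable

variable {T : X → X} {ε θ : ℝ} {μ : Measure X} {V W : Finset ℕ} {v w : ℝ}

lemma mono (h : Achievable T ε θ μ W v) (hvw : v ≤ w) : Achievable T ε θ μ W w :=
  let ⟨β, i, φ, L, hφ, hv⟩ := h
  ⟨β, i, φ, L, hφ, hv.trans hvw⟩

lemma nonneg [IsProbabilityMeasure μ] (hθ : 0 ≤ θ) (h : Achievable T ε θ μ W v) : 0 ≤ v :=
  let ⟨_, _, _, _, hφ, hv⟩ := h
  (add_nonneg (hφ.channelInfo_nonneg μ) (hφ.expectedCost_nonneg μ fun _ _ =>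
    mul_nonneg hθ (softErr_nonneg _ _ _ _ _))).trans hv

lemma mixture {μ₁ μ₂ : Measure X} [IsProbabilityMeasure μ₁] [IsProbabilityMeasure μ₂]
    (s t : ℝ≥0) (h₁ : Achievable T ε θ μ₁ W v)
    (h₂ : Achievable T ε θ μ₂ W w) :
    Achievable T ε θ (s • μ₁ + t • μ₂) W (s * v + t * w + 2) := by
  obtain ⟨β, _, φ, L, hφ, hv⟩ := h₁
  obtain ⟨γ, _, ψ, M, hψ, hw⟩ := h₂
  obtain ⟨p, q, hp, hq, hpq, hs, ht⟩ := exists_withDensity_eq_smul_of_add (μ₁ := μ₁) (μ₂ := μ₂) s t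
  have hp1 : ∀ x, p x ≤ 1 := fun x => hpq x ▸ le_self_add
  have hq1 : ∀ x, q x ≤ 1 := fun x => hpq x ▸ le_add_self
  refine ⟨β ⊕ γ, inferInstance, _, Sum.elim L M, hφ.mix hψ hp hq hpq, ?_⟩
  have info_fst := hφ.channelInfo_smul_le_of_withDensity hp hp1 hs
  have info_snd := hψ.channelInfo_smul_le_of_withDensity hq hq1 ht
  have cost_fst := expectedCost_smul_of_withDensity hp hs φ fun b x => θ * softErr T ε W (L b) x
  have cost_snd := expectedCost_smul_of_withDensity hq ht ψ fun b x => θ * softErr T ε W (M b) x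
  simp only [channelInfo, expectedCost] at info_fst info_snd cost_fst cost_snd hv hw ⊢
  simp only [Fintype.sum_sum_type, Sum.elim_inl, Sum.elim_inr, cost_fst, cost_snd]
  have hsv := mul_le_mul_of_nonneg_left hv s.2
  have htw := mul_le_mul_of_nonneg_left hw t.2
  simp only [NNReal.val_eq_coe] at hsv htw
  linarith

variable [BorelSpace X]

lemma mul_card (hT : Continuous T) (hθ : 0 ≤ θ) (μ : Measure X) [IsProbabilityMeasure μ]
    (W : Finset ℕ) : Achievable T ε θ μ W (θ * W.card) := by
  have : Nonempty X := nonempty_of_isProbabilityMeasure μ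
  refine ⟨PUnit, inferInstance, fun _ _ => 1, fun _ _ => Classical.arbitrary X,
    ⟨fun _ => measurable_const, fun _ _ => zero_le_one, fun _ => by simp⟩, ?_⟩
  have := integral_mono (integrable_softErr hT ε W (fun _ => Classical.arbitrary X) μ)
    (integrable_const _) fun x => softErr_le_card T ε W _ x
  simp only [integral_const, probReal_univ, one_smul] at this
  simpa [channelInfo, expectedCost, integral_const_mul] using
    mul_le_mul_of_nonneg_left this hθ

lemma map_add (hT : Continuous T) (i : ℕ) (h : Achievable T ε θ (μ.map T^[i]) W v) :
    Achievable T ε θ μ (W.map (addRightEmbedding i)) v := by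
  obtain ⟨β, _, φ, L, hφ, hv⟩ := h
  have hTi : Measurable T^[i] := (hT.iterate i).measurable
  refine ⟨β, inferInstance, fun b x => φ b (T^[i] x), fun b k => L b (k - i), hφ.comp hTi, ?_⟩
  rw [hφ.channelInfo_map hTi, hφ.expectedCost_map hTi fun b =>
    (continuous_softErr hT ε W (L b)).measurable.const_mul θ] at hv
  simpa only [softErr_map_add] using hv

lemma union (hT : Continuous T) [IsProbabilityMeasure μ] (hVW : Disjoint V W)
    (hV : Achievable T ε θ μ V v) (hW : Achievable T ε θ μ W w) :
    Achievable T ε θ μ (V ∪ W) (v + w) := by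
  obtain ⟨β, _, φ, L, hφ, hv⟩ := hV
  obtain ⟨γ, _, ψ, M, hψ, hw⟩ := hW
  refine ⟨β × γ, inferInstance, fun a x => φ a.1 x * ψ a.2 x,
    fun a k => if k ∈ V then L a.1 k else M a.2 k, hφ.prod hψ, ?_⟩
  simp only [softErr_union T ε hVW, mul_add]
  rw [hφ.expectedCost_prod hψ (fun b => (integrable_softErr hT ε V (L b) μ).const_mul θ)
    (fun b => (integrable_softErr hT ε W (M b) μ).const_mul θ)]
  linarith [hφ.channelInfo_prod_le hψ μ]

lemma eventually [CompactSpace X] (hT : Continuous T) {μ : ProbabilityMeasure X}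
    (h : Achievable T ε θ (μ : Measure X) W v) (hvw : v < w) :
    ∀ᶠ ν : ProbabilityMeasure X in 𝓝 μ, Achievable T ε θ (ν : Measure X) W w := by
  obtain ⟨β, _, φ, L, hφ, hv⟩ := h
  obtain ⟨g, hg, hg_cont, hlim⟩ := hφ.exists_continuous_tendsto_ae (μ : Measure X)
  have cost_cont := fun b => (continuous_softErr hT ε W (L b)).const_mul θ
  have lagrangian_lim := (tendsto_channelInfo hg hlim).add
    (tendsto_expectedCost hg hlim fun b => (integrable_softErr hT ε W (L b) _).const_mul θ)
  obtain ⟨j, hj⟩ := (lagrangian_lim.eventually (gt_mem_nhds (hv.trans_lt hvw))).exists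
  have lagrangian_cont := (continuous_channelInfo (hg_cont j)).add
    (continuous_expectedCost (hg_cont j) cost_cont)
  exact ((lagrangian_cont.tendsto μ).eventually (gt_mem_nhds hj)).mono fun ν hν =>
    ⟨β, inferInstance, g j, L, hg j, hν.le⟩

end Achievable

end Achievable

section BowenMetric

lemma bowenDist_lt_iff {X : Type*} [PseudoMetricSpace X] {T : X → X} {n : ℕ} {r : ℝ} (hr : 0 < r)
    {x y : X} : bowenDist T n x y < r ↔ ∀ k < n, dist (T^[k] x) (T^[k] y) < r := by
  rcases n.eq_zero_or_pos with rfl | hn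
  · simpa [bowenDist] using hr
  · have : Nonempty (Fin n) := ⟨⟨0, hn⟩⟩
    refine ⟨fun h k hk => (le_ciSup (finite_range _).bddAbove (⟨k, hk⟩ : Fin n)).trans_lt h,
      fun h => ?_⟩
    obtain ⟨k, hk⟩ := exists_eq_ciSup_of_finite
      (f := fun k : Fin n => dist (T^[(k : ℕ)] x) (T^[(k : ℕ)] y))
    exact hk.symm.trans_lt (h k k.2)

lemma le_bowenDist_iff {X : Type*} [PseudoMetricSpace X] {T : X → X} {n : ℕ} {r : ℝ} (hr : 0 < r)
    {x y : X} : r ≤ bowenDist T n x y ↔ ∃ k < n, r ≤ dist (T^[k] x) (T^[k] y) := by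
  rw [← not_lt, bowenDist_lt_iff hr]
  push Not
  rfl

lemma bowenDist_comm {X : Type*} [PseudoMetricSpace X] (T : X → X) (n : ℕ) (x y : X) :
    bowenDist T n x y = bowenDist T n y x := by
  simp only [bowenDist, dist_comm]

variable {X : Type u} [MetricSpace X] [CompactSpace X]

lemma exists_finite_coloring [MeasurableSpace X] [OpensMeasurableSpace X] {r : ℝ} (hr : 0 < r) :
    ∃ (κ : Type u) (_ : Fintype κ) (p : X → κ), (∀ i, MeasurableSet (p ⁻¹' {i})) ∧
      ∀ x y, p x = p y → dist x y < r := by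
  classical
  obtain ⟨t, -, ht, hcov⟩ := finite_cover_balls_of_compact (isCompact_univ (X := X)) (half_pos hr)
  have : Fintype t := ht.fintype
  let p : X → t → Prop := fun x i => x ∈ Metric.ball (i : X) (r / 2)
  have hp : Measurable p := measurable_pi_lambda _ fun i =>
    measurableSet_setOfPred.1 (Metric.isOpen_ball (x := (i : X)) (ε := r / 2)).measurableSet
  refine ⟨t → Prop, inferInstance, p, fun a => hp (measurableSet_singleton a), fun x y hxy => ?_⟩
  obtain ⟨i, hi, hxi⟩ := mem_iUnion₂.1 (hcov (mem_univ x))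
  have hyi : y ∈ Metric.ball i (r / 2) := (congrFun hxy ⟨i, hi⟩).mp hxi
  calc dist x y ≤ dist x i + dist y i := dist_triangle_right x y i
    _ < r / 2 + r / 2 := add_lt_add hxi hyi
    _ = r := add_halves r

lemma exists_finite_coloring_bowenDist [MeasurableSpace X] [OpensMeasurableSpace X] {T : X → X}
    (hT : Measurable T) (n : ℕ) {r : ℝ} (hr : 0 < r) :
    ∃ (κ : Type u) (_ : Fintype κ) (p : X → κ), (∀ i, MeasurableSet (p ⁻¹' {i})) ∧
      ∀ x y, p x = p y → bowenDist T n x y < r := by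
  classical
  obtain ⟨κ, _, p, hp, hpr⟩ := exists_finite_coloring (X := X) hr
  refine ⟨Fin n → κ, inferInstance, fun x k => p (T^[k] x), fun a => ?_, fun x y hxy =>
    (bowenDist_lt_iff hr).2 fun k hk => hpr _ _ (congrFun hxy ⟨k, hk⟩)⟩
  have : (fun x (k : Fin n) => p (T^[k] x)) ⁻¹' {a} = ⋂ k : Fin n, T^[k] ⁻¹' (p ⁻¹' {a k}) := by
    ext x
    simp [funext_iff]
  rw [this]
  exact MeasurableSet.iInter fun k => hT.iterate (k : ℕ) (hp (a k))

lemma bddAbove_card_separated {T : X → X} (hT : Continuous T) (n : ℕ) {r : ℝ} (hr : 0 < r) :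
    BddAbove {k | ∃ E : Finset X, E.card = k ∧
      ∀ x ∈ E, ∀ y ∈ E, x ≠ y → r ≤ bowenDist T n x y} := by
  borelize X
  obtain ⟨κ, _, p, -, hp⟩ := exists_finite_coloring_bowenDist hT.measurable n hr
  refine ⟨Fintype.card κ, ?_⟩
  rintro _ ⟨E, rfl, hE⟩
  refine Finset.card_le_card_of_injOn p (fun _ _ => Finset.mem_univ _) fun x hx y hy hxy => ?_
  by_contra hne
  exact (hp x y hxy).not_ge (hE x hx y hy hne)

lemma exists_separated_spanNum_le_card {T : X → X} (hT : Continuous T) (n : ℕ) {r : ℝ}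
    (hr : 0 < r) :
    ∃ E : Finset X, spanNum T n r univ ≤ E.card ∧
      ∀ x ∈ E, ∀ y ∈ E, x ≠ y → r ≤ bowenDist T n x y := by
  classical
  have separated_nonempty : {k | ∃ E : Finset X, E.card = k ∧
      ∀ x ∈ E, ∀ y ∈ E, x ≠ y → r ≤ bowenDist T n x y}.Nonempty := ⟨0, ∅, by simp⟩
  obtain ⟨E, hE_card, hE⟩ := Nat.sSup_mem separated_nonempty (bddAbove_card_separated hT n hr)
  refine ⟨E, Nat.sInf_le ⟨E, rfl, fun z _ => ?_⟩, hE⟩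
  by_contra! hz
  have hzE : z ∉ E := fun h =>
    (hz z h).not_gt ((bowenDist_lt_iff hr).2 fun _ _ => by rwa [dist_self])
  have insert_separated : ∀ x ∈ insert z E, ∀ y ∈ insert z E, x ≠ y → r ≤ bowenDist T n x y := by
    intro x hx y hy hxy
    rcases Finset.mem_insert.1 hx with rfl | hxE <;> rcases Finset.mem_insert.1 hy with rfl | hyE
    exacts [absurd rfl hxy, hz y hyE, bowenDist_comm T n x y ▸ hz x hxE, hE x hxE y hyE hxy]
  have hle := le_csSup (bddAbove_card_separated hT n hr) ⟨insert z E, rfl, insert_separated⟩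
  rw [Finset.card_insert_of_notMem hzE, ← hE_card] at hle
  exact Nat.not_succ_le_self _ hle

end BowenMetric

section SeparatedSets

variable {X : Type u} [MetricSpace X] {T : X → X} {ε θ : ℝ} {n : ℕ} {E : Finset X}
  {κ : Type*} [Fintype κ] {p : X → κ}

-- A point of `E` is determined by recording, at each time `k`, either that its orbit is
-- `3 * ε`-close to `l k` or else the colour of its position, and each colour costs a factor
-- `exp (-θ)`.
lemma sum_exp_neg_softErr_le (hε : 0 < ε) (hθ : 0 ≤ θ)
    (hp : ∀ x y, p x = p y → dist x y < 6 * ε)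
    (hE : ∀ x ∈ E, ∀ y ∈ E, x ≠ y → 6 * ε ≤ bowenDist T n x y) (l : ℕ → X) :
    ∑ x ∈ E, Real.exp (-(θ * softErr T ε (Finset.range n) l x)) ≤
      (1 + Fintype.card κ * Real.exp (-θ)) ^ n := by
  classical
  let code : X → Fin n → Option κ := fun x k =>
    if dist (T^[k] x) (l k) < 3 * ε then none else some (p (T^[k] x))
  let weight : Option κ → ℝ := fun o => o.elim 1 fun _ => Real.exp (-θ)
  have weight_nonneg : ∀ o, 0 ≤ weight o := by rintro (_ | _) <;> simp [weight, Real.exp_nonneg]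
  have code_injOn : InjOn code E := by
    intro x hx y hy hxy
    by_contra hne
    obtain ⟨k, hk, hd⟩ := (le_bowenDist_iff (by positivity)).1 (hE x hx y hy hne)
    have hcode := congrFun hxy ⟨k, hk⟩
    simp only [code] at hcode
    split_ifs at hcode with h1 h2
    · linarith [dist_triangle_right (T^[k] x) (T^[k] y) (l k)]
    · exact (hp _ _ (Option.some.inj hcode)).not_ge hd
  have exp_le : ∀ x, Real.exp (-(θ * softErr T ε (Finset.range n) l x)) ≤
      ∏ k, weight (code x k) := by
    intro x
    rw [softErr, Finset.sum_range, Finset.mul_sum, ← Finset.sum_neg_distrib, Real.exp_sum]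
    refine Finset.prod_le_prod (fun _ _ => (Real.exp_pos _).le) fun k _ => ?_
    simp only [code]
    split_ifs with h
    · exact Real.exp_le_one_iff.2 (neg_nonpos.2 (mul_nonneg hθ (ramp_nonneg _ _)))
    · rw [ramp_eq_one hε (not_lt.1 h), mul_one]
      rfl
  calc ∑ x ∈ E, Real.exp (-(θ * softErr T ε (Finset.range n) l x))
      ≤ ∑ x ∈ E, ∏ k, weight (code x k) := Finset.sum_le_sum fun x _ => exp_le x
    _ = ∑ a ∈ E.image code, ∏ k, weight (a k) :=
        (Finset.sum_image (f := fun a => ∏ k, weight (a k)) code_injOn).symm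
    _ ≤ ∑ a : Fin n → Option κ, ∏ k, weight (a k) :=
        Finset.sum_le_sum_of_subset_of_nonneg (Finset.subset_univ _)
          fun a _ _ => Finset.prod_nonneg fun k _ => weight_nonneg _
    _ = (1 + Fintype.card κ * Real.exp (-θ)) ^ n := by
        rw [← Fintype.sum_pow, Fintype.sum_option]
        simp [weight]

lemma Achievable.log_card_le [MeasurableSpace X] [MeasurableSingletonClass X] (hε : 0 < ε)
    (hθ : 0 ≤ θ) (hp : ∀ x y, p x = p y → dist x y < 6 * ε) (hE_ne : E.Nonempty)
    (hE : ∀ x ∈ E, ∀ y ∈ E, x ≠ y → 6 * ε ≤ bowenDist T n x y) {v : ℝ}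
    (h : Achievable T ε θ (ProbabilityTheory.uniformOn (E : Set X)) (Finset.range n) v) :
    Real.log E.card ≤ v + n * Real.log (1 + Fintype.card κ * Real.exp (-θ)) := by
  obtain ⟨β, _, φ, L, hφ, hv⟩ := h
  have := hφ.log_card_le_channelInfo_add hE_ne (by positivity) fun b =>
    sum_exp_neg_softErr_le hε hθ hp hE (L b)
  rw [Real.log_pow] at this
  linarith

end SeparatedSets

lemma sum_range_sum_range_add_mul {M : Type*} [AddCommMonoid M] (f : ℕ → M) (m q : ℕ) :
    ∑ t ∈ Finset.range m, ∑ j ∈ Finset.range q, f (t + j * m) =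
      ∑ i ∈ Finset.range (q * m), f i := by
  induction q with
  | zero => simp
  | succ q ih =>
    rw [add_mul, one_mul, Finset.sum_range_add, ← ih, ← Finset.sum_add_distrib]
    refine Finset.sum_congr rfl fun t _ => ?_
    rw [Finset.sum_range_succ, add_comm t (q * m)]

lemma exists_forall_Ico_subset_range {m : ℕ} (hm : 0 < m) (n : ℕ) :
    ∃ q, q * m ≤ n ∧ n ≤ q * m + 2 * m ∧
      ∀ t < m, Finset.Ico t (t + q * m) ⊆ Finset.range n := by
  rcases le_or_gt m n with hmn | hnm
  · obtain ⟨q, hq⟩ := Nat.exists_eq_succ_of_ne_zero (Nat.div_pos hmn hm).ne'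
    have div_mul_le := Nat.div_mul_le_self n m
    have lt_div_mul_add := Nat.lt_div_mul_add hm (a := n)
    rw [hq, Nat.succ_mul] at div_mul_le lt_div_mul_add
    refine ⟨q, by linarith, by linarith, fun t ht i hi => Finset.mem_range.2 ?_⟩
    linarith [(Finset.mem_Ico.1 hi).2]
  · exact ⟨0, by simp, by linarith, by simp⟩

/-- The average `(1 / n) * ∑ i < n, (T^i)_* ν` of `ν` along its orbit; it is `0` for `n = 0`. -/
def orbitAverage {X : Type*} [MeasurableSpace X] (T : X → X) (ν : Measure X) (n : ℕ) : Measure X :=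
  ∑ i ∈ Finset.range n, (n : ℝ≥0)⁻¹ • ν.map T^[i]

section OrbitAverage

variable {X : Type*} [MeasurableSpace X] {T : X → X} {n : ℕ}

lemma sum_range_inv_eq_one (hn : n ≠ 0) : ∑ _i ∈ Finset.range n, (n : ℝ≥0)⁻¹ = 1 := by
  rw [Finset.sum_const, Finset.card_range, nsmul_eq_mul, mul_inv_cancel₀ (Nat.cast_ne_zero.2 hn)]

lemma isProbabilityMeasure_orbitAverage (hT : Measurable T) (ν : Measure X)
    [IsProbabilityMeasure ν] (hn : n ≠ 0) : IsProbabilityMeasure (orbitAverage T ν n) := by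
  have := fun i => Measure.isProbabilityMeasure_map (μ := ν) (hT.iterate i).aemeasurable
  constructor
  simp only [orbitAverage, Measure.finsetSum_apply, Measure.smul_apply, measure_univ]
  rw [← Finset.sum_smul, sum_range_inv_eq_one hn, one_smul]

lemma integral_orbitAverage (hT : Measurable T) (ν : Measure X) [IsProbabilityMeasure ν] (n : ℕ)
    {f : X → ℝ} (hf : Measurable f) {C : ℝ} (hC : ∀ x, ‖f x‖ ≤ C) :
    ∫ x, f x ∂orbitAverage T ν n = (n : ℝ)⁻¹ * ∑ i ∈ Finset.range n, ∫ x, f (T^[i] x) ∂ν := by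
  have := fun i => Measure.isProbabilityMeasure_map (μ := ν) (hT.iterate i).aemeasurable
  have f_integrable : ∀ i, Integrable f (ν.map T^[i]) := fun i =>
    .of_bound hf.aestronglyMeasurable C (.of_forall hC)
  rw [orbitAverage, integral_finsetSum_measure fun i _ => (f_integrable i).smul_measure_nnreal,
    Finset.mul_sum]
  refine Finset.sum_congr rfl fun i _ => ?_
  rw [integral_smul_nnreal_measure,
    integral_map (hT.iterate i).aemeasurable hf.aestronglyMeasurable]
  simp [NNReal.smul_def]

lemma norm_integral_comp_sub_integral_orbitAverage_le (hT : Measurable T) (ν : Measure X)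
    [IsProbabilityMeasure ν] (n : ℕ) {f : X → ℝ} (hf : Measurable f) {C : ℝ}
    (hC : ∀ x, ‖f x‖ ≤ C) :
    ‖∫ x, f (T x) ∂orbitAverage T ν n - ∫ x, f x ∂orbitAverage T ν n‖ ≤ (n : ℝ)⁻¹ * (2 * C) := by
  have integral_le : ∀ i, ‖∫ x, f (T^[i] x) ∂ν‖ ≤ C := fun i => by
    simpa using norm_integral_le_of_norm_le_const (μ := ν) (.of_forall fun x => hC (T^[i] x))
  rw [integral_orbitAverage hT ν n (f := fun x => f (T x)) (hf.comp hT) fun x => hC (T x),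
    integral_orbitAverage hT ν n hf hC, ← mul_sub, ← Finset.sum_sub_distrib]
  simp only [← Function.iterate_succ_apply']
  rw [Finset.sum_range_sub (fun i => ∫ x, f (T^[i] x) ∂ν), norm_mul, norm_inv, Real.norm_natCast]
  gcongr
  exact (norm_sub_le _ _).trans ((add_le_add (integral_le n) (integral_le 0)).trans_eq
    (two_mul C).symm)

end OrbitAverage

namespace Achievable

variable {X : Type u} [MetricSpace X] [MeasurableSpace X] [BorelSpace X] {T : X → X} {ε θ : ℝ}

lemma blocks (hT : Continuous T) (hθ : 0 ≤ θ) {μ : Measure X} [IsProbabilityMeasure μ] {m t q : ℕ}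
    {v : ℕ → ℝ} (h : ∀ j < q, Achievable T ε θ (μ.map T^[t + j * m]) (Finset.range m) (v j)) :
    Achievable T ε θ μ (Finset.Ico t (t + q * m)) (∑ j ∈ Finset.range q, v j) := by
  induction q with
  | zero => simpa using mul_card hT hθ μ (∅ : Finset ℕ) (ε := ε)
  | succ q ih =>
    have last_block := (h q q.lt_succ_self).map_add hT
    rw [Finset.range_eq_Ico, Finset.map_add_right_Ico, zero_add, add_comm m] at last_block
    have all_blocks := (ih fun j hj => h j (hj.trans q.lt_succ_self)).union hT
      (Finset.Ico_disjoint_Ico_consecutive _ _ _) last_block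
    rwa [Finset.Ico_union_Ico_eq_Ico (Nat.le_add_right _ _) (Nat.le_add_right _ _), add_assoc,
      ← Nat.succ_mul, ← Finset.sum_range_succ] at all_blocks

-- Cutting `range n` into blocks of length `m` starting at one of the `m` offsets and averaging
-- over the offset uses every value `f i` at most once; the two ends, of total length at most
-- `2 * m`, are coded trivially.
lemma range_of_forall_map (hT : Continuous T) (hθ : 0 ≤ θ) {μ : Measure X}
    [IsProbabilityMeasure μ] {m : ℕ} (hm : 0 < m) (n : ℕ) {f : ℕ → ℝ}
    (h : ∀ i, Achievable T ε θ (μ.map T^[i]) (Finset.range m) (f i)) :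
    Achievable T ε θ μ (Finset.range n)
      ((∑ i ∈ Finset.range n, f i) / m + θ * (2 * m)) := by
  have f_nonneg : ∀ i, 0 ≤ f i := fun i =>
    have := Measure.isProbabilityMeasure_map (μ := μ) (hT.iterate i).measurable.aemeasurable
    (h i).nonneg hθ
  obtain ⟨q, q_mul_le, le_q_mul_add, Ico_subset_range⟩ := exists_forall_Ico_subset_range hm n
  obtain ⟨t, ht, hft⟩ : ∃ t ∈ Finset.range m, ∑ j ∈ Finset.range q, f (t + j * m) ≤
      (∑ i ∈ Finset.range n, f i) / m := by
    refine Finset.exists_le_of_sum_le (Finset.nonempty_range_iff.2 hm.ne') ?_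
    rw [sum_range_sum_range_add_mul, Finset.sum_const, Finset.card_range, nsmul_eq_mul,
      mul_div_cancel₀ _ (by positivity)]
    exact Finset.sum_le_sum_of_subset_of_nonneg (Finset.range_mono q_mul_le) fun i _ _ => f_nonneg i
  have Ico_subset := Ico_subset_range t (Finset.mem_range.1 ht)
  have ends_card : ((Finset.range n \ Finset.Ico t (t + q * m)).card : ℝ) ≤ 2 * m := by
    rw [Finset.card_sdiff_of_subset Ico_subset, Finset.card_range, Nat.card_Ico]
    exact_mod_cast (show n - (t + q * m - t) ≤ 2 * m by omega)
  have coded := (blocks hT hθ fun j _ => h (t + j * m) :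
    Achievable T ε θ μ (Finset.Ico t (t + q * m)) _).union hT Finset.disjoint_sdiff
    (mul_card hT hθ μ (Finset.range n \ Finset.Ico t (t + q * m)))
  rw [Finset.union_sdiff_of_subset Ico_subset] at coded
  exact coded.mono (add_le_add hft (mul_le_mul_of_nonneg_left ends_card hθ))

lemma of_orbitAverage (hT : Continuous T) (hθ : 0 ≤ θ) {ν : Measure X} [IsProbabilityMeasure ν]
    {m n : ℕ} (hm : 0 < m) (hn : n ≠ 0) {v : ℝ}
    (h : Achievable T ε θ (orbitAverage T ν n) (Finset.range m) v) :
    Achievable T ε θ ν (Finset.range n) (n * v / m + θ * (2 * m)) := by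
  obtain ⟨β, _, φ, L, hφ, hv⟩ := h
  have := fun i => Measure.isProbabilityMeasure_map (μ := ν) (hT.iterate i).measurable.aemeasurable
  let c : β → X → ℝ := fun b x => θ * softErr T ε (Finset.range m) (L b) x
  have c_integrable : ∀ i b, Integrable (c b) (ν.map T^[i]) := fun i b =>
    (integrable_softErr hT ε _ (L b) _).const_mul θ
  have average_le := (add_le_add_left (hφ.sum_mul_channelInfo_le (sum_range_inv_eq_one hn)
    fun i => ν.map T^[i]) (expectedCost (orbitAverage T ν n) φ c)).trans hv
  rw [orbitAverage, hφ.expectedCost_sum_smul c_integrable, ← Finset.mul_sum, ← Finset.mul_sum,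
    ← mul_add, ← Finset.sum_add_distrib] at average_le
  have sum_le : ∑ i ∈ Finset.range n,
      (channelInfo (ν.map T^[i]) φ + expectedCost (ν.map T^[i]) φ c) ≤ n * v := by
    have hn_pos : (0 : ℝ) < n := by positivity
    rw [NNReal.coe_inv, NNReal.coe_natCast] at average_le
    rwa [inv_mul_le_iff₀ hn_pos] at average_le
  exact (range_of_forall_map hT hθ hm n fun i => ⟨β, inferInstance, φ, L, hφ, le_rfl⟩).mono
    (by gcongr)

end Achievable

section InvariantMeasures

lemma ergodic_of_forall_mixture_eq {X : Type*} [MeasurableSpace X] {T : X → X}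
    {μ : ProbabilityMeasure X} (hμ : MeasurePreserving T (μ : Measure X) μ)
    (h : ∀ (μ₁ μ₂ : ProbabilityMeasure X) (s t : ℝ≥0), MeasurePreserving T (μ₁ : Measure X) μ₁ →
      MeasurePreserving T (μ₂ : Measure X) μ₂ → 0 < s → 0 < t → s + t = 1 →
      (μ : Measure X) = s • (μ₁ : Measure X) + t • (μ₂ : Measure X) → μ₁ = μ₂) :
    Ergodic T (μ : Measure X) := by
  refine .of_mem_extremePoints ⟨⟨hμ, inferInstance⟩, ?_⟩
  rintro ν₁ ⟨hν₁, _⟩ ν₂ ⟨hν₂, _⟩ ⟨s, t, hs, ht, hst, hμ_mix⟩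
  lift s to ℝ≥0 using ne_top_of_le_ne_top ENNReal.one_ne_top (hst ▸ le_self_add)
  lift t to ℝ≥0 using ne_top_of_le_ne_top ENNReal.one_ne_top (hst ▸ le_add_self)
  have hst' : s + t = 1 := by exact_mod_cast hst
  have eq₁₂ : ν₁ = ν₂ := congrArg Subtype.val <| h ⟨ν₁, inferInstance⟩ ⟨ν₂, inferInstance⟩ s t hν₁
    hν₂ (by exact_mod_cast hs) (by exact_mod_cast ht) hst' hμ_mix.symm
  rw [← hμ_mix, ← eq₁₂, ← add_smul, hst, one_smul]

variable {X : Type*} [MetricSpace X] [MeasurableSpace X] [BorelSpace X] {T : X → X}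

lemma isClosed_setOf_measurePreserving (hT : Continuous T) :
    IsClosed {μ : ProbabilityMeasure X | MeasurePreserving T (μ : Measure X) μ} := by
  have eq_fixedPoints : {μ : ProbabilityMeasure X | MeasurePreserving T (μ : Measure X) μ} =
      {μ | μ.map hT.measurable.aemeasurable = μ} := by
    ext μ
    exact ⟨fun h => Subtype.ext h.map_eq, fun h => ⟨hT.measurable, congrArg Subtype.val h⟩⟩
  rw [eq_fixedPoints]
  exact isClosed_eq (ProbabilityMeasure.continuous_map hT) continuous_id

lemma measurePreserving_of_forall_integral_comp_eq (hT : Continuous T) {μ : Measure X}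
    [IsFiniteMeasure μ] (h : ∀ f : X → ℝ, Continuous f → ∫ x, f (T x) ∂μ = ∫ x, f x ∂μ) :
    MeasurePreserving T μ μ := by
  refine ⟨hT.measurable, ext_of_forall_integral_eq_of_IsFiniteMeasure fun f => ?_⟩
  rw [integral_map hT.measurable.aemeasurable f.continuous.aestronglyMeasurable]
  exact h f f.continuous

variable [CompactSpace X]

lemma measurePreserving_of_mapClusterPt_orbitAverage (hT : Continuous T) {ν : ℕ → Measure X}
    [∀ k, IsProbabilityMeasure (ν k)] {N : ℕ → ℕ} (hN : Tendsto N atTop atTop)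
    {u : ℕ → ProbabilityMeasure X} (hu : ∀ k, (u k : Measure X) = orbitAverage T (ν k) (N k))
    {μ : ProbabilityMeasure X} (hμ : MapClusterPt μ atTop u) :
    MeasurePreserving T (μ : Measure X) μ := by
  refine measurePreserving_of_forall_integral_comp_eq hT fun f hf => ?_
  obtain ⟨C, hC⟩ := isCompact_univ.exists_bound_of_continuousOn hf.continuousOn
  let defect : ProbabilityMeasure X → ℝ := fun ν =>
    ∫ x, f (T x) ∂(ν : Measure X) - ∫ x, f x ∂(ν : Measure X)
  have defect_continuous : Continuous defect :=
    (continuous_integral (hf.comp hT)).sub (continuous_integral hf)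
  have defect_tendsto : Tendsto (defect ∘ u) atTop (𝓝 0) := by
    refine squeeze_zero_norm (a := fun k => (N k : ℝ)⁻¹ * (2 * C)) (fun k => ?_) ?_
    · simp only [Function.comp_apply, defect, hu]
      exact norm_integral_comp_sub_integral_orbitAverage_le hT.measurable (ν k) (N k)
        hf.measurable fun x => hC x (mem_univ x)
    · simpa using ((tendsto_inv_atTop_nhds_zero_nat (𝕜 := ℝ)).comp hN).mul_const (2 * C)
  have cluster : MapClusterPt (defect μ) atTop (defect ∘ u) :=
    hμ.continuousAt_comp defect_continuous.continuousAt
  exact sub_eq_zero.1 (eq_of_nhds_neBot (cluster.clusterPt.mono defect_tendsto))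

lemma exists_seq_separating_integral (X : Type*) [MetricSpace X] [CompactSpace X]
    [MeasurableSpace X] [BorelSpace X] :
    ∃ f : ℕ → X → ℝ, (∀ i, Continuous (f i)) ∧ (∀ i x, ‖f i x‖ ≤ 1) ∧
      ∀ μ ν : ProbabilityMeasure X,
        (∀ i, ∫ x, f i x ∂(μ : Measure X) = ∫ x, f i x ∂(ν : Measure X)) → μ = ν := by
  let g := TopologicalSpace.denseSeq C(X, ℝ)
  have norm_add_one_pos : ∀ i, 0 < 1 + ‖g i‖ := fun i => by positivity
  refine ⟨fun i x => (1 + ‖g i‖)⁻¹ * g i x, fun i => by fun_prop, fun i x => ?_, fun μ ν h => ?_⟩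
  · rw [norm_mul, norm_inv, Real.norm_of_nonneg (norm_add_one_pos i).le,
      inv_mul_le_iff₀ (norm_add_one_pos i), mul_one]
    exact ((g i).norm_coe_le_norm x).trans (le_add_of_nonneg_left zero_le_one)
  · have integral_continuous : ∀ μ : ProbabilityMeasure X,
        Continuous fun f : C(X, ℝ) => ∫ x, f x ∂(μ : Measure X) := fun μ =>
      (LipschitzWith.mk_one fun f g => by
        have f_integrable : ∀ f : C(X, ℝ), Integrable f (μ : Measure X) := fun f =>
          f.continuous.integrable_of_hasCompactSupport (.of_compactSpace f)
        rw [dist_eq_norm, ← integral_sub (f_integrable f) (f_integrable g)]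
        simpa using norm_integral_le_of_norm_le_const (μ := (μ : Measure X))
          (.of_forall fun x => (dist_eq_norm (f x) (g x)).ge.trans (f.dist_apply_le_dist x))
        ).continuous
    have integral_eq := (TopologicalSpace.denseRange_denseSeq C(X, ℝ)).equalizer
      (integral_continuous μ) (integral_continuous ν) <| funext fun i => by
        have := h i
        rw [integral_const_mul, integral_const_mul] at this
        exact mul_left_cancel₀ (inv_pos.2 (norm_add_one_pos i)).ne' this
    exact Subtype.ext (ext_of_forall_integral_eq_of_IsFiniteMeasure (μ := (μ : Measure X))
      (ν := (ν : Measure X)) fun f => congrFun integral_eq f.toContinuousMap)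

lemma integral_smul_add_smul {f : X → ℝ} (hf : Continuous f) {μ μ₁ μ₂ : ProbabilityMeasure X}
    {s t : ℝ≥0} (hμ : (μ : Measure X) = s • (μ₁ : Measure X) + t • (μ₂ : Measure X)) :
    ∫ x, f x ∂(μ : Measure X) =
      s * ∫ x, f x ∂(μ₁ : Measure X) + t * ∫ x, f x ∂(μ₂ : Measure X) := by
  have f_integrable : ∀ μ : ProbabilityMeasure X, Integrable f (μ : Measure X) := fun μ =>
    hf.integrable_of_hasCompactSupport (HasCompactSupport.of_compactSpace f)
  rw [hμ, integral_add_measure (f_integrable μ₁).smul_measure_nnreal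
    (f_integrable μ₂).smul_measure_nnreal, integral_smul_nnreal_measure,
    integral_smul_nnreal_measure]
  rfl

lemma exists_continuous_strictConvex (X : Type*) [MetricSpace X] [CompactSpace X]
    [MeasurableSpace X] [BorelSpace X] :
    ∃ Φ : ProbabilityMeasure X → ℝ, Continuous Φ ∧
      ∀ (μ μ₁ μ₂ : ProbabilityMeasure X) (s t : ℝ≥0), 0 < s → 0 < t → s + t = 1 → μ₁ ≠ μ₂ →
        (μ : Measure X) = s • (μ₁ : Measure X) + t • (μ₂ : Measure X) →
        Φ μ < s * Φ μ₁ + t * Φ μ₂ := by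
  obtain ⟨f, hf, hf1, hsep⟩ := exists_seq_separating_integral X
  let a : ℕ → ProbabilityMeasure X → ℝ := fun i μ => ∫ x, f i x ∂(μ : Measure X)
  have a_norm_le : ∀ i μ, ‖a i μ‖ ≤ 1 := fun i μ => by
    simpa using norm_integral_le_of_norm_le_const (μ := (μ : Measure X)) (.of_forall (hf1 i))
  have term_norm_le : ∀ i μ, ‖(1 / 2 : ℝ) ^ i * a i μ ^ 2‖ ≤ (1 / 2) ^ i := fun i μ => by
    rw [norm_mul, norm_pow, norm_pow, Real.norm_of_nonneg one_half_pos.le]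
    exact mul_le_of_le_one_right (by positivity)
      (pow_le_one₀ (norm_nonneg _) (a_norm_le i μ))
  have term_summable : ∀ μ, Summable fun i => (1 / 2 : ℝ) ^ i * a i μ ^ 2 := fun μ =>
    summable_geometric_two.of_norm_bounded (term_norm_le · μ)
  refine ⟨fun μ => ∑' i, (1 / 2 : ℝ) ^ i * a i μ ^ 2,
    continuous_tsum (fun i => ((continuous_integral (hf i)).pow 2).const_mul _)
      summable_geometric_two term_norm_le, fun μ μ₁ μ₂ s t hs ht hst hne hμ => ?_⟩
  have convexity_gap : ∀ i,
      s * ((1 / 2 : ℝ) ^ i * a i μ₁ ^ 2) + t * ((1 / 2 : ℝ) ^ i * a i μ₂ ^ 2)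
        - (1 / 2 : ℝ) ^ i * a i μ ^ 2 =
      (1 / 2 : ℝ) ^ i * (s * t * (a i μ₁ - a i μ₂) ^ 2) := fun i => by
    have ha : a i μ = s * a i μ₁ + t * a i μ₂ := integral_smul_add_smul (hf i) hμ
    have hst' : (t : ℝ) = 1 - s := by rw [← NNReal.coe_one, ← hst]; simp
    rw [ha, hst']
    ring
  obtain ⟨i, hi⟩ : ∃ i, a i μ₁ ≠ a i μ₂ := by
    contrapose! hne
    exact hsep μ₁ μ₂ hne
  have summable_rhs := ((term_summable μ₁).mul_left (s : ℝ)).add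
    ((term_summable μ₂).mul_left (t : ℝ))
  rw [← tsum_mul_left, ← tsum_mul_left,
    ← ((term_summable μ₁).mul_left _).tsum_add ((term_summable μ₂).mul_left _)]
  refine Summable.tsum_lt_tsum (i := i) (fun j => ?_) ?_ (term_summable μ) summable_rhs
  · rw [← sub_nonneg, convexity_gap]
    positivity
  · rw [← sub_pos, convexity_gap]
    have := sub_ne_zero.2 hi
    positivity

-- Among the maximisers of `F`, one that maximises a strictly convex continuous function is an
-- extreme invariant measure.
lemma exists_ergodic_le_of_upperSemicontinuous (hT : Continuous T) {F : ProbabilityMeasure X → ℝ}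
    (hF : UpperSemicontinuous F)
    (hF_convex : ∀ (μ μ₁ μ₂ : ProbabilityMeasure X) (s t : ℝ≥0),
      MeasurePreserving T (μ₁ : Measure X) μ₁ → MeasurePreserving T (μ₂ : Measure X) μ₂ →
      s + t = 1 → (μ : Measure X) = s • (μ₁ : Measure X) + t • (μ₂ : Measure X) →
      F μ ≤ s * F μ₁ + t * F μ₂)
    {μ₀ : ProbabilityMeasure X} (hμ₀ : MeasurePreserving T (μ₀ : Measure X) μ₀) :
    ∃ μ : ProbabilityMeasure X, Ergodic T (μ : Measure X) ∧ F μ₀ ≤ F μ := by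
  have inv_closed := isClosed_setOf_measurePreserving hT
  obtain ⟨M, hM, hM_max⟩ := (hF.upperSemicontinuousOn _).exists_isMaxOn ⟨μ₀, hμ₀⟩
    inv_closed.isCompact
  obtain ⟨Φ, hΦ, hΦ_convex⟩ := exists_continuous_strictConvex X
  obtain ⟨μ, ⟨hμ, hMμ⟩, hμ_max⟩ := (inv_closed.inter (hF.isClosed_preimage (F M))
    ).isCompact.exists_isMaxOn ⟨M, hM, le_refl (F M)⟩ hΦ.continuousOn
  refine ⟨μ, ergodic_of_forall_mixture_eq hμ fun μ₁ μ₂ s t h₁ h₂ hs ht hst hμ_mix => ?_,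
    (hM_max hμ₀).trans hMμ⟩
  have hs' : (0 : ℝ) < s := hs
  have ht' : (0 : ℝ) < t := ht
  have ht_eq : (t : ℝ) = 1 - s := by rw [← NNReal.coe_one, ← hst]; simp
  have F_le_mixture : F M ≤ s * F μ₁ + t * F μ₂ :=
    (mem_Ici.1 hMμ).trans (hF_convex μ μ₁ μ₂ s t h₁ h₂ hst hμ_mix)
  have F_le₁ : s * F μ₁ ≤ s * F M := mul_le_mul_of_nonneg_left (hM_max h₁) s.2
  have F_le₂ : t * F μ₂ ≤ t * F M := mul_le_mul_of_nonneg_left (hM_max h₂) t.2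
  have le_F₁ : F M ≤ F μ₁ := le_of_mul_le_mul_left (by rw [ht_eq] at *; linarith) hs'
  have le_F₂ : F M ≤ F μ₂ := le_of_mul_le_mul_left (by rw [ht_eq] at *; linarith) ht'
  have Φ_le₁ : s * Φ μ₁ ≤ s * Φ μ := mul_le_mul_of_nonneg_left (hμ_max ⟨h₁, le_F₁⟩) s.2
  have Φ_le₂ : t * Φ μ₂ ≤ t * Φ μ := mul_le_mul_of_nonneg_left (hμ_max ⟨h₂, le_F₂⟩) t.2
  by_contra hne
  have Φ_lt_mixture := hΦ_convex μ μ₁ μ₂ s t hs ht hst hne hμ_mix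
  rw [ht_eq] at *
  linarith

end InvariantMeasures

section LagrangianRate

variable {X : Type u} [MetricSpace X] [MeasurableSpace X]

/-- The optimal Lagrangian value per unit of time, over all windows `range m` with `0 < m`. -/
def lagrangianRate (T : X → X) (ε θ : ℝ) (μ : Measure X) : ℝ :=
  sInf {r | ∃ m : ℕ, 0 < m ∧ Achievable T ε θ μ (Finset.range m) (m * r)}

variable {T : X → X} {ε θ : ℝ} {μ : Measure X}

lemma lagrangianRate_le [IsProbabilityMeasure μ] (hθ : 0 ≤ θ) {m : ℕ} (hm : 0 < m) {r : ℝ}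
    (h : Achievable T ε θ μ (Finset.range m) (m * r)) : lagrangianRate T ε θ μ ≤ r :=
  csInf_le ⟨0, fun _ ⟨_, hm, h⟩ => nonneg_of_mul_nonneg_right (h.nonneg hθ) (Nat.cast_pos.2 hm)⟩
    ⟨m, hm, h⟩

variable [BorelSpace X]

lemma exists_achievable_of_lagrangianRate_lt (hT : Continuous T) (hθ : 0 ≤ θ)
    [IsProbabilityMeasure μ] {r : ℝ} (h : lagrangianRate T ε θ μ < r) :
    ∃ m : ℕ, 0 < m ∧ ∃ r' < r, Achievable T ε θ μ (Finset.range m) (m * r') := by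
  have rates_nonempty :
      {r | ∃ m : ℕ, 0 < m ∧ Achievable T ε θ μ (Finset.range m) (m * r)}.Nonempty :=
    ⟨θ, 1, one_pos, by simpa using Achievable.mul_card hT hθ μ (Finset.range 1) (ε := ε)⟩
  obtain ⟨r', ⟨m, hm, hr'⟩, hlt⟩ := exists_lt_of_csInf_lt rates_nonempty h
  exact ⟨m, hm, r', hlt, hr'⟩

lemma upperSemicontinuous_lagrangianRate [CompactSpace X] (hT : Continuous T) (hθ : 0 ≤ θ) :
    UpperSemicontinuous fun μ : ProbabilityMeasure X => lagrangianRate T ε θ μ := by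
  intro μ y hy
  obtain ⟨m, hm, r, hry, hr⟩ := exists_achievable_of_lagrangianRate_lt hT hθ hy
  obtain ⟨r', hrr', hr'y⟩ := exists_between hry
  exact (hr.eventually hT (mul_lt_mul_of_pos_left hrr' (Nat.cast_pos.2 hm))).mono fun ν hν =>
    (lagrangianRate_le hθ hm hν).trans_lt hr'y

lemma Achievable.range_mul (hT : Continuous T) (hθ : 0 ≤ θ) [IsProbabilityMeasure μ]
    (hμ : MeasurePreserving T μ μ) {m : ℕ} {r : ℝ}
    (h : Achievable T ε θ μ (Finset.range m) (m * r)) (q : ℕ) :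
    Achievable T ε θ μ (Finset.range (q * m)) ((q * m : ℕ) * r) := by
  have blocks := Achievable.blocks hT hθ (t := 0) (q := q) (v := fun _ => m * r) fun j _ => by
    rwa [(hμ.iterate _).map_eq]
  rw [zero_add, ← Finset.range_eq_Ico] at blocks
  exact blocks.mono (by simp [mul_assoc])

-- Both measures are coded over a common block length, chosen so long that the bounded loss in
-- `Achievable.mixture` is negligible.
lemma lagrangianRate_mixture_le (hT : Continuous T) (hθ : 0 ≤ θ) {μ μ₁ μ₂ : Measure X}
    [IsProbabilityMeasure μ] [IsProbabilityMeasure μ₁] [IsProbabilityMeasure μ₂]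
    (h₁ : MeasurePreserving T μ₁ μ₁) (h₂ : MeasurePreserving T μ₂ μ₂) {s t : ℝ≥0}
    (hst : s + t = 1) (hμ : μ = s • μ₁ + t • μ₂) :
    lagrangianRate T ε θ μ ≤ s * lagrangianRate T ε θ μ₁ + t * lagrangianRate T ε θ μ₂ := by
  refine le_of_forall_pos_le_add fun δ hδ => ?_
  obtain ⟨m₁, hm₁, r₁, hr₁_lt, hr₁⟩ := exists_achievable_of_lagrangianRate_lt hT hθ
    (lt_add_of_pos_right (lagrangianRate T ε θ μ₁) (half_pos hδ))
  obtain ⟨m₂, hm₂, r₂, hr₂_lt, hr₂⟩ := exists_achievable_of_lagrangianRate_lt hT hθ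
    (lt_add_of_pos_right (lagrangianRate T ε θ μ₂) (half_pos hδ))
  obtain ⟨k, hk⟩ := exists_nat_gt (4 / δ)
  let n := k * m₂ * m₁
  have coded₁ : Achievable T ε θ μ₁ (Finset.range n) (n * r₁) := hr₁.range_mul hT hθ h₁ (k * m₂)
  have coded₂ : Achievable T ε θ μ₂ (Finset.range n) (n * r₂) := by
    simpa only [n, mul_right_comm k m₂ m₁] using hr₂.range_mul hT hθ h₂ (k * m₁)
  have coded := Achievable.mixture s t coded₁ coded₂
  rw [← hμ] at coded
  have loss_le : 2 ≤ n * (δ / 2) := by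
    have k_le_n : (k : ℝ) ≤ n := by
      exact_mod_cast (mul_assoc k m₂ m₁).ge.trans' (Nat.le_mul_of_pos_right k (by positivity))
    rw [div_lt_iff₀ hδ] at hk
    linarith [mul_le_mul_of_nonneg_right k_le_n hδ.le]
  have n_pos : 0 < n := Nat.pos_of_ne_zero fun h => by norm_num [h] at loss_le
  refine (lagrangianRate_le hθ n_pos (r := s * r₁ + t * r₂ + δ / 2)
    (coded.mono (by linarith))).trans ?_
  have ht_eq : (t : ℝ) = 1 - s := by rw [← NNReal.coe_one, ← hst]; simp
  have hsr₁ := mul_le_mul_of_nonneg_left hr₁_lt.le s.2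
  have htr₂ := mul_le_mul_of_nonneg_left hr₂_lt.le t.2
  rw [NNReal.val_eq_coe] at hsr₁ htr₂
  rw [ht_eq] at *
  linarith

lemma exists_ergodic_lagrangianRate_le [CompactSpace X] (hT : Continuous T) (hθ : 0 ≤ θ)
    {μ₀ : ProbabilityMeasure X} (hμ₀ : MeasurePreserving T (μ₀ : Measure X) μ₀) :
    ∃ μ : ProbabilityMeasure X, Ergodic T (μ : Measure X) ∧
      lagrangianRate T ε θ (μ₀ : Measure X) ≤ lagrangianRate T ε θ (μ : Measure X) :=
  exists_ergodic_le_of_upperSemicontinuous hT (upperSemicontinuous_lagrangianRate hT hθ)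
    (fun _ _ _ _ _ h₁ h₂ hst hμ => lagrangianRate_mixture_le hT hθ h₁ h₂ hst hμ) hμ₀

end LagrangianRate

section SpanGrowth

variable {X : Type u} [MetricSpace X] [CompactSpace X] {T : X → X}

lemma exists_separated_of_lt_spanGrowth (hT : Continuous T) {a r : ℝ} (ha : 0 ≤ a) (hr : 0 < r)
    (h : ENNReal.ofReal a < spanGrowth T r) :
    ∃ (N : ℕ → ℕ) (E : ℕ → Finset X), Tendsto N atTop atTop ∧ ∀ k, N k ≠ 0 ∧ (E k).Nonempty ∧
      (∀ x ∈ E k, ∀ y ∈ E k, x ≠ y → r ≤ bowenDist T (N k) x y) ∧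
      N k * a ≤ Real.log (E k).card := by
  have log_gt : ∃ᶠ n : ℕ in atTop, n * a < Real.log (spanNum T n r univ) ∧ n ≠ 0 := by
    refine ((frequently_lt_of_lt_limsup (by isBoundedDefault) h).and_eventually
      (eventually_ne_atTop 0)).mono fun n ⟨hn, hn0⟩ => ⟨?_, hn0⟩
    rw [ENNReal.lt_div_iff_mul_lt (.inl (Nat.cast_ne_zero.2 hn0)) (.inl (ENNReal.natCast_ne_top n)),
      ← ENNReal.ofReal_natCast, ← ENNReal.ofReal_mul ha,
      ENNReal.ofReal_lt_ofReal_iff_of_nonneg (by positivity)] at hn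
    rwa [mul_comm]
  obtain ⟨N, hN_mono, hN⟩ := extraction_of_frequently_atTop log_gt
  choose E hE_card hE using fun k => exists_separated_spanNum_le_card hT (N k) hr
  have span_pos : ∀ k, 0 < spanNum T (N k) r univ := fun k => Nat.pos_of_ne_zero fun h0 => by
    have := (hN k).1
    rw [h0, Nat.cast_zero, Real.log_zero] at this
    exact this.not_ge (by positivity)
  refine ⟨N, E, hN_mono.tendsto_atTop, fun k => ⟨(hN k).2,
    Finset.card_pos.1 ((span_pos k).trans_le (hE_card k)), hE k, (hN k).1.le.trans ?_⟩⟩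
  exact Real.log_le_log (Nat.cast_pos.2 (span_pos k)) (Nat.cast_le.2 (hE_card k))

variable [MeasurableSpace X] [BorelSpace X] {ε θ : ℝ} {κ : Type*} [Fintype κ] {p : X → κ}

lemma le_lagrangianRate_of_mapClusterPt (hT : Continuous T) (hε : 0 < ε) (hθ : 0 ≤ θ)
    (hp : ∀ x y, p x = p y → dist x y < 6 * ε) {a : ℝ} {N : ℕ → ℕ} (hN : Tendsto N atTop atTop)
    {E : ℕ → Finset X} (hE : ∀ k, N k ≠ 0 ∧ (E k).Nonempty ∧
      (∀ x ∈ E k, ∀ y ∈ E k, x ≠ y → 6 * ε ≤ bowenDist T (N k) x y) ∧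
      N k * a ≤ Real.log (E k).card)
    {u : ℕ → ProbabilityMeasure X} (hu : ∀ k, (u k : Measure X) =
      orbitAverage T (ProbabilityTheory.uniformOn (E k : Set X)) (N k))
    {μ : ProbabilityMeasure X} (hμ : MapClusterPt μ atTop u) :
    a - Real.log (1 + Fintype.card κ * Real.exp (-θ)) ≤ lagrangianRate T ε θ (μ : Measure X) := by
  set c := Real.log (1 + Fintype.card κ * Real.exp (-θ))
  by_contra! hlt
  obtain ⟨m, hm, r, hr_lt, hr⟩ := exists_achievable_of_lagrangianRate_lt hT hθ hlt
  obtain ⟨r', hrr', hr'_lt⟩ := exists_between hr_lt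
  have achievable_u := hμ.frequently
    (hr.eventually hT (mul_lt_mul_of_pos_left hrr' (Nat.cast_pos.2 hm)))
  have gap_large : ∀ᶠ k in atTop, θ * (2 * m) < N k * (a - c - r') :=
    ((tendsto_natCast_atTop_atTop.comp hN).atTop_mul_const
      (sub_pos.2 hr'_lt)).eventually_gt_atTop _
  obtain ⟨k, hk_coded, hk_gap⟩ := (achievable_u.and_eventually gap_large).exists
  obtain ⟨hN0, hE_ne, hE_sep, hE_card⟩ := hE k
  have := ProbabilityTheory.isProbabilityMeasure_uniformOn (E k).finite_toSet hE_ne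
  rw [hu] at hk_coded
  have log_card_le := (hk_coded.of_orbitAverage hT hθ hm hN0).log_card_le hε hθ hp hE_ne hE_sep
  rw [mul_left_comm, mul_div_cancel_left₀ _ (Nat.cast_ne_zero.2 hm.ne')] at log_card_le
  linarith

lemma exists_measurePreserving_le_lagrangianRate (hT : Continuous T) (hε : 0 < ε) (hθ : 0 ≤ θ)
    (hp : ∀ x y, p x = p y → dist x y < 6 * ε) {a : ℝ} (ha : 0 ≤ a)
    (h : ENNReal.ofReal a < spanGrowth T (6 * ε)) :
    ∃ μ : ProbabilityMeasure X, MeasurePreserving T (μ : Measure X) μ ∧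
      a - Real.log (1 + Fintype.card κ * Real.exp (-θ)) ≤ lagrangianRate T ε θ (μ : Measure X) := by
  obtain ⟨N, E, hN, hE⟩ := exists_separated_of_lt_spanGrowth hT ha (by positivity) h
  have isProbabilityMeasure_uniformOn := fun k =>
    ProbabilityTheory.isProbabilityMeasure_uniformOn (E k).finite_toSet (hE k).2.1
  let u : ℕ → ProbabilityMeasure X := fun k =>
    ⟨orbitAverage T (ProbabilityTheory.uniformOn (E k : Set X)) (N k),
      isProbabilityMeasure_orbitAverage hT.measurable _ (hE k).1⟩
  obtain ⟨μ, hμ⟩ := exists_clusterPt_of_compactSpace (map u atTop)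
  exact ⟨μ, measurePreserving_of_mapClusterPt_orbitAverage hT hN (fun _ => rfl) hμ,
    le_lagrangianRate_of_mapClusterPt hT hε hθ hp hN hE (fun _ => rfl) hμ⟩

end SpanGrowth

section FiniteLabels

lemma pairwiseDisjoint_preimage_singleton {Ω ι : Type*} (f : Ω → ι) {s : Set ι} :
    s.PairwiseDisjoint fun i => f ⁻¹' {i} :=
  fun _ _ _ _ hij => (disjoint_singleton.2 hij).preimage f

lemma measurable_comp₂_of_finite {Ω ι κ : Type*} [MeasurableSpace Ω] [MeasurableSpace ι]
    [MeasurableSingletonClass ι] [Finite ι] [MeasurableSpace κ] [MeasurableSingletonClass κ]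
    [Finite κ] (g : ι → κ → ℝ) {U : Ω → ι} (hU : Measurable U) {V : Ω → κ} (hV : Measurable V) :
    Measurable fun z => g (U z) (V z) :=
  (measurable_of_finite (Function.uncurry g)).comp (hU.prodMk hV)

variable {Ω A B ι κ : Type*} [MeasurableSpace Ω] [MeasurableSpace A] [MeasurableSpace B]
  [MeasurableSpace ι] [MeasurableSingletonClass ι] [Fintype ι]
  [MeasurableSpace κ] [MeasurableSingletonClass κ] [Fintype κ]

lemma isFinPartition_image_preimage_singleton [DecidableEq (Set Ω)] {f : Ω → ι}
    (hf : Measurable f) : IsFinPartition (Finset.univ.image fun i => f ⁻¹' {i}) := by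
  refine ⟨?_, ?_, eq_univ_of_forall fun x => ⟨f ⁻¹' {f x}, by simp, rfl⟩⟩
  · simp only [Finset.mem_image, Finset.mem_univ, true_and, forall_exists_index,
      forall_apply_eq_imp_iff]
    exact fun i => hf (measurableSet_singleton i)
  · simp only [Finset.mem_image, Finset.mem_univ, true_and, forall_exists_index,
      forall_apply_eq_imp_iff]
    exact fun i j hij => (disjoint_singleton.2 (by rintro rfl; exact hij rfl)).preimage f

lemma ofReal_sum_le_mutualInfo (P : Measure Ω) (ξ : Ω → A) (η : Ω → B) {f : A → ι}
    (hf : Measurable f) {g : B → κ} (hg : Measurable g) :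
    ENNReal.ofReal (∑ i, ∑ b, P.real (ξ ⁻¹' (f ⁻¹' {i}) ∩ η ⁻¹' (g ⁻¹' {b})) *
      Real.log (P.real (ξ ⁻¹' (f ⁻¹' {i}) ∩ η ⁻¹' (g ⁻¹' {b})) /
        (P.real (ξ ⁻¹' (f ⁻¹' {i})) * P.real (η ⁻¹' (g ⁻¹' {b}))))) ≤ mutualInfo P ξ η := by
  classical
  refine le_iSup₂_of_le _ (isFinPartition_image_preimage_singleton hf) <|
    le_iSup₂_of_le _ (isFinPartition_image_preimage_singleton hg) <|
      ENNReal.ofReal_le_ofReal (le_of_eq ?_)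
  rw [Finset.sum_image_of_disjoint (by simp) (pairwiseDisjoint_preimage_singleton f)]
  refine Finset.sum_congr rfl fun i _ => ?_
  rw [Finset.sum_image_of_disjoint (by simp) (pairwiseDisjoint_preimage_singleton g)]
  rfl

lemma integral_map_eq_sum (P : Measure Ω) [IsFiniteMeasure P] {f : Ω → ι} (hf : Measurable f)
    (g : ι → ℝ) : ∫ i, g i ∂P.map f = ∑ i, P.real (f ⁻¹' {i}) * g i := by
  rw [integral_fintype .of_finite]
  exact Finset.sum_congr rfl fun i _ => by
    rw [map_measureReal_apply hf (measurableSet_singleton i), smul_eq_mul]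

end FiniteLabels

section ConditionalChannel

variable {Ω ι κ : Type*} [MeasurableSpace Ω] [MeasurableSpace ι] [MeasurableSingletonClass ι]
  [MeasurableSpace κ] [MeasurableSingletonClass κ] [Fintype κ] [Nonempty κ]
  {P : Measure Ω} [IsFiniteMeasure P] {U : Ω → ι} {V : Ω → κ}

/-- The channel sending `i` to the conditional law of `V` given `U = i`. -/
def conditionalChannel (P : Measure Ω) [IsFiniteMeasure P] (U : Ω → ι) (V : Ω → κ) (b : κ)
    (i : ι) : ℝ :=
  (ProbabilityTheory.condDistrib V U P i).real {b}

lemma measureReal_mul_conditionalChannel (hU : Measurable U) (hV : Measurable V) (b : κ) (i : ι) :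
    P.real (U ⁻¹' {i}) * conditionalChannel P U V b i = P.real (U ⁻¹' {i} ∩ V ⁻¹' {b}) := by
  have h := congrArg (fun ρ : Measure (ι × κ) => ρ.real ({i} ×ˢ {b}))
    (ProbabilityTheory.compProd_map_condDistrib (X := U) (μ := P) hV.aemeasurable)
  simp only [measureReal_def, Measure.compProd_apply_prod (measurableSet_singleton i)
    (measurableSet_singleton b), lintegral_singleton, ENNReal.toReal_mul,
    Measure.map_apply hU (measurableSet_singleton i), Measure.map_apply (hU.prodMk hV)
      ((measurableSet_singleton i).prod (measurableSet_singleton b))] at h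
  rw [mul_comm]
  exact h

lemma isChannel_conditionalChannel [Finite ι] : IsChannel (conditionalChannel P U V) where
  measurable b := measurable_of_finite _
  nonneg b i := measureReal_nonneg
  sum_eq_one i := by
    simp only [conditionalChannel]
    rw [sum_measureReal_singleton, Finset.coe_univ, probReal_univ]

lemma sum_measureReal_inter_preimage_singleton [Fintype ι] (hU : Measurable U) (s : Set Ω) :
    ∑ i, P.real (U ⁻¹' {i} ∩ s) = P.real s := by
  have h := sum_measureReal_preimage_singleton (μ := P.restrict s) Finset.univ (f := U)
    fun i _ => hU (measurableSet_singleton i)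
  simpa only [measureReal_restrict_apply (hU (measurableSet_singleton _)), Finset.coe_univ,
    preimage_univ, measureReal_restrict_apply MeasurableSet.univ, univ_inter] using h

lemma channelInfo_conditionalChannel [Fintype ι] (hU : Measurable U) (hV : Measurable V) :
    channelInfo (P.map U) (conditionalChannel P U V) =
      ∑ i, ∑ b, P.real (U ⁻¹' {i} ∩ V ⁻¹' {b}) * Real.log (P.real (U ⁻¹' {i} ∩ V ⁻¹' {b}) /
        (P.real (U ⁻¹' {i}) * P.real (V ⁻¹' {b}))) := by
  have joint := measureReal_mul_conditionalChannel (P := P) hU hV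
  rw [Finset.sum_comm]
  refine Finset.sum_congr rfl fun b _ => ?_
  have marginal := sum_measureReal_inter_preimage_singleton (P := P) hU (V ⁻¹' {b})
  rw [integral_map_eq_sum P hU, integral_map_eq_sum P hU]
  simp only [joint]
  rw [marginal, negMulLog, neg_mul, ← mul_neg, ← marginal, Finset.sum_mul,
    ← Finset.sum_sub_distrib, marginal]
  refine Finset.sum_congr rfl fun i _ => ?_
  rw [negMulLog, neg_mul, mul_neg, mul_neg, ← mul_assoc, joint]
  rcases eq_or_ne (P.real (U ⁻¹' {i} ∩ V ⁻¹' {b})) 0 with h0 | h0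
  · simp [h0]
  have hi : P.real (U ⁻¹' {i}) ≠ 0 := fun h =>
    h0 (measureReal_mono_null inter_subset_left h)
  have hb : P.real (V ⁻¹' {b}) ≠ 0 := fun h =>
    h0 (measureReal_mono_null inter_subset_right h)
  have hc : conditionalChannel P U V b i ≠ 0 := fun h => h0 (by rw [← joint, h, mul_zero])
  rw [← joint b i, mul_div_mul_left _ _ hi, Real.log_div hc hb]
  ring

lemma expectedCost_conditionalChannel [Finite ι] (hU : Measurable U) (hV : Measurable V)
    (c : κ → ι → ℝ) :
    expectedCost (P.map U) (conditionalChannel P U V) c = ∫ z, c (V z) (U z) ∂P := by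
  have := Fintype.ofFinite ι
  have hUV : Measurable fun z => (U z, V z) := hU.prodMk hV
  have hc : Measurable fun a : ι × κ => c a.2 a.1 := measurable_of_finite _
  rw [← integral_map (f := fun a : ι × κ => c a.2 a.1) hUV.aemeasurable hc.aestronglyMeasurable,
    integral_map_eq_sum P hUV, Fintype.sum_prod_type, Finset.sum_comm]
  refine Finset.sum_congr rfl fun b _ => ?_
  rw [integral_map_eq_sum P hU]
  refine Finset.sum_congr rfl fun i _ => ?_
  rw [← mul_assoc, measureReal_mul_conditionalChannel hU hV, ← singleton_prod_singleton,
    mk_preimage_prod]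

end ConditionalChannel

section ErrorCount

/-- The number of times `k < n` at which `y` is at distance at least `r` from the orbit of `x`. -/
def errCount {X : Type*} [PseudoMetricSpace X] (T : X → X) (n : ℕ) (r : ℝ) (x : X) (y : Fin n → X) :
    ℕ :=
  Nat.card {k : Fin n // r ≤ dist (T^[k] x) (y k)}

variable {X : Type*} [MetricSpace X] {T : X → X} {n : ℕ}

lemma softErr_le_errCount {ε : ℝ} (hε : 0 < ε) (l : ℕ → X) (x : X) :
    softErr T ε (Finset.range n) l x ≤ errCount T n (2 * ε) x fun k => l k := by
  classical
  rw [errCount, Nat.card_eq_fintype_card, Fintype.card_subtype, ← Finset.sum_boole, softErr,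
    Finset.sum_range]
  refine Finset.sum_le_sum fun k _ => ?_
  split_ifs with h
  exacts [ramp_le_one _ _, (ramp_eq_zero hε (not_le.1 h).le).le]

lemma errCount_le_of_bowenDist_lt {r s δ : ℝ} (hδ : 0 < δ) (hrs : r + δ ≤ s) {x x' : X}
    (h : bowenDist T n x x' < δ) (y : Fin n → X) : errCount T n s x y ≤ errCount T n r x' y := by
  refine Nat.card_mono (s := {k : Fin n | s ≤ dist (T^[k] x) (y k)}) (toFinite _) fun k hk => ?_
  have hk_close := (bowenDist_lt_iff hδ).1 h k k.2
  have := dist_triangle (T^[k] x) (T^[k] x') (y k)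
  change s ≤ dist (T^[k] x) (y k) at hk
  change r ≤ dist (T^[k] x') (y k)
  linarith

end ErrorCount

lemma exists_measurable_retraction {B : Type*} [MeasurableSpace B] [MeasurableSingletonClass B]
    {F : Finset B} (hF : F.Nonempty) : ∃ o : B → F, Measurable o ∧ ∀ y ∈ F, (o y : B) = y := by
  classical
  obtain ⟨a, ha⟩ := hF
  refine ⟨fun y => if h : y ∈ F then ⟨y, h⟩ else ⟨a, ha⟩, ?_, fun y hy => by simp [hy]⟩
  refine (measurable_const (a := (⟨a, ha⟩ : F))).measurable_of_countable_ne
    (F.countable_toSet.mono fun y hy => ?_)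
  by_contra h
  exact hy (by simp_all)

lemma exists_measurable_ae_eq_of_measure_eq_one {X : Type*} [MeasurableSpace X]
    [MeasurableSingletonClass X] {n : ℕ} {ν : Measure (X × (Fin n → X))}
    [IsProbabilityMeasure ν] {S : Finset X} (hS : ν {z | ∀ k, z.2 k ∈ S} = 1) :
    ∃ (F : Finset (Fin n → X)) (o : (Fin n → X) → F), Measurable o ∧
      ∀ᵐ z ∂ν, (o z.2 : Fin n → X) = z.2 := by
  have hS' : MeasurableSet {z : X × (Fin n → X) | ∀ k, z.2 k ∈ S} := by
    simp only [ofPred_forall]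
    exact .iInter fun k => S.measurableSet.preimage ((measurable_pi_apply k).comp measurable_snd)
  have ae_mem : ∀ᵐ z ∂ν, ∀ k, z.2 k ∈ S := (prob_compl_eq_zero_iff hS').2 hS
  obtain ⟨z₀, hz₀⟩ := ae_mem.exists
  obtain ⟨o, ho, ho_eq⟩ := exists_measurable_retraction
    (F := Fintype.piFinset fun _ : Fin n => S) ⟨z₀.2, Fintype.mem_piFinset.2 hz₀⟩
  exact ⟨_, o, ho, ae_mem.mono fun z hz => ho_eq _ (Fintype.mem_piFinset.2 hz)⟩

section RateDistortion

variable {X : Type u} [MetricSpace X] {T : X → X} {ε θ c : ℝ} {n : ℕ}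

lemma integral_errCount_le {Ω : Type*} [MeasurableSpace Ω] {ν : Measure Ω} {r s δ : ℝ}
    {ξ ξ' : Ω → X} {η η' : Ω → Fin n → X}
    (h_meas : Measurable fun z => (errCount T n s (ξ' z) (η' z) : ℝ)) (hδ : 0 < δ)
    (hrs : r + δ ≤ s) (hξ : ∀ z, bowenDist T n (ξ' z) (ξ z) < δ) (hη : η' =ᵐ[ν] η) (hc : 0 ≤ c)
    (h : ∫⁻ z, errCount T n r (ξ z) (η z) ∂ν ≤ ENNReal.ofReal c) :
    ∫ z, (errCount T n s (ξ' z) (η' z) : ℝ) ∂ν ≤ c := by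
  rw [integral_eq_lintegral_of_nonneg_ae (.of_forall fun _ => Nat.cast_nonneg _)
    h_meas.aestronglyMeasurable]
  refine ENNReal.toReal_le_of_le_ofReal hc ((lintegral_mono_ae ?_).trans h)
  filter_upwards [hη] with z hz
  rw [ENNReal.ofReal_natCast, hz, Nat.cast_le]
  exact errCount_le_of_bowenDist_lt hδ hrs (hξ z) (η z)

variable [MeasurableSpace X] [BorelSpace X]

lemma Achievable.of_conditionalChannel (hT : Continuous T) {Ω ι : Type*} {β : Type u}
    [MeasurableSpace Ω] [MeasurableSpace ι] [MeasurableSingletonClass ι] [Finite ι]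
    [MeasurableSpace β] [MeasurableSingletonClass β] [Fintype β] [Nonempty β] {P : Measure Ω}
    [IsProbabilityMeasure P] {ξ : Ω → X} (hξ : Measurable ξ) {p : X → ι} (hp : Measurable p)
    {V : Ω → β} (hV : Measurable V) {W : Finset ℕ} {L : β → ℕ → X} {D : β → ι → ℝ}
    (hD : ∀ b x, θ * softErr T ε W (L b) x ≤ D b (p x)) :
    Achievable T ε θ (P.map ξ) W (channelInfo (P.map (p ∘ ξ)) (conditionalChannel P (p ∘ ξ) V)
      + ∫ z, D (V z) (p (ξ z)) ∂P) := by
  have := Measure.isProbabilityMeasure_map (μ := P) hξ.aemeasurable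
  have hφ : IsChannel (conditionalChannel P (p ∘ ξ) V) := isChannel_conditionalChannel
  have integrable_D : ∀ b, Integrable (fun x => D b (p x)) (P.map ξ) := fun b =>
    (Integrable.of_finite (f := D b)).comp_measurable hp
  refine ⟨β, inferInstance, fun b x => conditionalChannel P (p ∘ ξ) V b (p x), L, hφ.comp hp, ?_⟩
  rw [← Measure.map_map hp hξ, hφ.channelInfo_map hp]
  gcongr
  calc expectedCost (P.map ξ) (fun b x => conditionalChannel P (p ∘ ξ) V b (p x))
        (fun b x => θ * softErr T ε W (L b) x)
      ≤ expectedCost (P.map ξ) (fun b x => conditionalChannel P (p ∘ ξ) V b (p x))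
        (fun b x => D b (p x)) :=
        (hφ.comp hp).expectedCost_mono (fun b => (integrable_softErr hT ε W _ _).const_mul θ)
          integrable_D hD
    _ = expectedCost (P.map (p ∘ ξ)) (conditionalChannel P (p ∘ ξ) V) D := by
        rw [← Measure.map_map hp hξ, hφ.expectedCost_map hp fun b => measurable_of_finite _]
    _ = ∫ z, D (V z) (p (ξ z)) ∂P := expectedCost_conditionalChannel (hp.comp hξ) hV D

lemma Achievable.of_finite_labels (hT : Continuous T) (hε : 0 < ε) (hθ : 0 ≤ θ) (hc : 0 ≤ c)
    {Ω ι : Type*} {κ : Type u} [MeasurableSpace Ω] {P : Measure Ω} [IsProbabilityMeasure P]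
    [MeasurableSpace ι] [MeasurableSingletonClass ι] [Finite ι] [MeasurableSpace κ]
    [MeasurableSingletonClass κ] [Finite κ] {ξ : Ω → X} (hξ : Measurable ξ) {η : Ω → Fin n → X}
    (hη : Measurable η) {p : X → ι} (hp_meas : Measurable p)
    (hp : ∀ x y, p x = p y → bowenDist T n x y < ε / 2) {o : (Fin n → X) → κ} (ho : Measurable o)
    {e : κ → Fin n → X} (he : ∀ᵐ z ∂P, e (o (η z)) = η z)
    (h : ∫⁻ z, errCount T n ε (ξ z) (η z) ∂P ≤ ENNReal.ofReal c) (hI : mutualInfo P ξ η ≠ ⊤) :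
    Achievable T ε θ (P.map ξ) (Finset.range n) ((mutualInfo P ξ η).toReal + θ * c) := by
  have := Fintype.ofFinite ι
  have := Fintype.ofFinite κ
  obtain ⟨z₀⟩ : Nonempty Ω := nonempty_of_isProbabilityMeasure P
  have nonempty_X : Nonempty X := ⟨ξ z₀⟩
  have nonempty_κ : Nonempty κ := ⟨o (η z₀)⟩
  let f : ι → X := Function.invFun p
  have hf : ∀ x, bowenDist T n (f (p x)) x < ε / 2 := fun x =>
    hp _ _ (Function.invFun_eq ⟨x, rfl⟩)
  let L : κ → ℕ → X := fun b => Function.extend Fin.val (e b) fun _ => ξ z₀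
  let D : κ → ι → ℝ := fun b i => errCount T n (3 / 2 * ε) (f i) (e b)
  have soft_le : ∀ b x, softErr T ε (Finset.range n) (L b) x ≤ D b (p x) := fun b x => by
    have hL : (fun k : Fin n => L b k) = e b :=
      funext fun k => Fin.val_injective.extend_apply _ _ _
    refine (softErr_le_errCount hε _ _).trans (Nat.cast_le.2 ?_)
    rw [hL]
    exact errCount_le_of_bowenDist_lt (half_pos hε) (by linarith)
      (bowenDist_comm T n _ x ▸ hf x) _
  have info_le := (ENNReal.ofReal_le_iff_le_toReal hI).1 <|
    ofReal_sum_le_mutualInfo P ξ η hp_meas ho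
  have measurable_D : Measurable fun z => D (o (η z)) (p (ξ z)) :=
    measurable_comp₂_of_finite D (ho.comp hη) (hp_meas.comp hξ)
  have cost_le : ∫ z, D (o (η z)) (p (ξ z)) ∂P ≤ c :=
    integral_errCount_le measurable_D (half_pos hε) (by linarith) (fun z => hf (ξ z)) he hc h
  refine (Achievable.of_conditionalChannel hT hξ hp_meas (ho.comp hη)
    (D := fun b i => θ * D b i) fun b x => mul_le_mul_of_nonneg_left (soft_le b x) hθ).mono
    (add_le_add ?_ ?_)
  · rwa [channelInfo_conditionalChannel (hp_meas.comp hξ) (ho.comp hη)]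
  · rw [integral_const_mul]
    exact mul_le_mul_of_nonneg_left cost_le hθ

variable [CompactSpace X]

lemma Achievable.of_mutualInfo_ne_top (hT : Continuous T) (hε : 0 < ε) (hθ : 0 ≤ θ)
    (hc : 0 ≤ c) {ν : Measure (X × (Fin n → X))} [IsProbabilityMeasure ν] {S : Finset X}
    (hS : ν {z | ∀ k, z.2 k ∈ S} = 1) (h : ∫⁻ z, errCount T n ε z.1 z.2 ∂ν ≤ ENNReal.ofReal c)
    (hI : mutualInfo ν Prod.fst Prod.snd ≠ ⊤) :
    Achievable T ε θ (ν.map Prod.fst) (Finset.range n)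
      ((mutualInfo ν Prod.fst Prod.snd).toReal + θ * c) := by
  obtain ⟨ι, _, p, hp_preimage, hp⟩ :=
    exists_finite_coloring_bowenDist hT.measurable n (half_pos hε)
  let _ : MeasurableSpace ι := ⊤
  obtain ⟨F, o, ho, hoη⟩ := exists_measurable_ae_eq_of_measure_eq_one hS
  exact Achievable.of_finite_labels hT hε hθ hc measurable_fst measurable_snd
    (measurable_to_countable' hp_preimage) hp ho hoη h hI

lemma ofReal_lagrangianRate_sub_le_RDistLInftyS (hT : Continuous T) (hε : 0 < ε) (hθ : 0 ≤ θ)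
    {s : ℝ} (hs : 0 ≤ s) {μ : Measure X} [IsProbabilityMeasure μ] :
    ENNReal.ofReal (lagrangianRate T ε θ μ - θ * s) ≤ RDistLInftyS T μ ε s := by
  refine le_iInf₂ fun n hn => le_iInf₂ fun ν hν => le_iInf₂ fun h_fst ⟨S, hS⟩ =>
    le_iInf fun h_err => ?_
  have hn' : (0 : ℝ) < n := Nat.cast_pos.2 hn
  rcases eq_or_ne (mutualInfo ν Prod.fst Prod.snd) ⊤ with hI | hI
  · simp [hI, ENNReal.top_div_of_ne_top]
  have rate_le : lagrangianRate T ε θ μ ≤ (mutualInfo ν Prod.fst Prod.snd).toReal / n + θ * s := by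
    refine lagrangianRate_le hθ hn (h_fst ▸ (Achievable.of_mutualInfo_ne_top hT hε hθ
      (mul_nonneg hs hn'.le) hS h_err.le hI).mono (le_of_eq ?_))
    field_simp
  rw [← ENNReal.ofReal_toReal hI, ← ENNReal.ofReal_natCast, ← ENNReal.ofReal_div_of_pos hn']
  exact ENNReal.ofReal_le_ofReal (sub_le_iff_le_add.2 rate_le)

end RateDistortion

lemma sum_negMulLog_le_log_card {ι : Type*} {s : Finset ι} {p : ι → ℝ} (hp : ∀ i ∈ s, 0 ≤ p i)
    (hsum : ∑ i ∈ s, p i = 1) : ∑ i ∈ s, negMulLog (p i) ≤ Real.log s.card := by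
  have hs : (s.card : ℝ) ≠ 0 := Nat.cast_ne_zero.2 fun h => by
    simp [Finset.card_eq_zero.1 h] at hsum
  have gibbs := sum_negMulLog_le_neg_sum_mul_log (q := fun _ => (s.card : ℝ)⁻¹) hp
    (fun _ _ => by positivity) (fun _ _ h => absurd h (inv_ne_zero hs)) (by simp [hs, hsum])
  simpa [← Finset.sum_mul, hsum] using gibbs

section MutualInfo

lemma card_filter_measureReal_preimage_ne_zero_le {Ω B : Type*} [MeasurableSpace Ω]
    {P : Measure Ω} {η : Ω → B} {q : Finset (Set B)}
    (hq : ∀ s ∈ q, ∀ t ∈ q, s ≠ t → Disjoint s t) {F : Finset B} (hF : ∀ᵐ ω ∂P, η ω ∈ F)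
    [DecidablePred fun t => P.real (η ⁻¹' t) ≠ 0] :
    (q.filter fun t => P.real (η ⁻¹' t) ≠ 0).card ≤ F.card := by
  refine Finset.card_le_card_of_forall_subsingleton (fun t y => y ∈ t) (fun t ht => ?_)
    fun y _ s hs t ht => ?_
  · by_contra! h
    have null : P (η ⁻¹' t) = 0 := measure_mono_null (fun ω hω hωF => h _ hωF hω) hF
    exact (Finset.mem_filter.1 ht).2 (by rw [measureReal_def, null, ENNReal.toReal_zero])
  · by_contra hst
    exact disjoint_left.1 (hq s (Finset.mem_filter.1 hs.1).1 t (Finset.mem_filter.1 ht.1).1 hst)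
      hs.2 ht.2

variable {Ω A B : Type*} [MeasurableSpace Ω] [MeasurableSpace A] [MeasurableSpace B]
  {P : Measure Ω} {ξ : Ω → A} {η : Ω → B}

lemma IsFinPartition.sum_measureReal_inter [IsFiniteMeasure P] (hξ : Measurable ξ)
    {p : Finset (Set A)} (hp : IsFinPartition p) (V : Set Ω) :
    ∑ s ∈ p, P.real (ξ ⁻¹' s ∩ V) = P.real V := by
  obtain ⟨hp_meas, hp_disj, hp_cover⟩ := hp
  have cover : ⋃ s ∈ p, ξ ⁻¹' s = univ := by
    rw [← preimage_iUnion₂, ← preimage_univ, ← hp_cover, sUnion_eq_biUnion]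
    rfl
  calc ∑ s ∈ p, P.real (ξ ⁻¹' s ∩ V) = ∑ s ∈ p, (P.restrict V).real (ξ ⁻¹' s) :=
        Finset.sum_congr rfl fun s hs => (measureReal_restrict_apply (hξ (hp_meas s hs))).symm
    _ = (P.restrict V).real (⋃ s ∈ p, ξ ⁻¹' s) :=
        (measureReal_biUnion_finset (fun s hs t ht hst => (hp_disj s hs t ht hst).preimage ξ)
          fun s hs => hξ (hp_meas s hs)).symm
    _ = P.real V := by rw [cover, measureReal_restrict_apply .univ, univ_inter]

lemma sum_negMulLog_measureReal_preimage_le_log_card [IsProbabilityMeasure P] (hη : Measurable η)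
    {q : Finset (Set B)} (hq : IsFinPartition q) {F : Finset B} (hF : ∀ᵐ ω ∂P, η ω ∈ F) :
    ∑ t ∈ q, negMulLog (P.real (η ⁻¹' t)) ≤ Real.log F.card := by
  classical
  have hsum : ∑ t ∈ q.filter fun t => P.real (η ⁻¹' t) ≠ 0, P.real (η ⁻¹' t) = 1 := by
    rw [Finset.sum_filter_ne_zero]
    simpa using hq.sum_measureReal_inter (P := P) hη univ
  have card_pos : 0 < (q.filter fun t => P.real (η ⁻¹' t) ≠ 0).card :=
    Finset.card_pos.2 (Finset.nonempty_of_sum_ne_zero (hsum.trans_ne one_ne_zero))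
  calc ∑ t ∈ q, negMulLog (P.real (η ⁻¹' t))
      = ∑ t ∈ q.filter fun t => P.real (η ⁻¹' t) ≠ 0, negMulLog (P.real (η ⁻¹' t)) :=
        (Finset.sum_filter_of_ne fun t _ => mt fun h0 => by rw [h0, Real.negMulLog_zero]).symm
    _ ≤ Real.log (q.filter fun t => P.real (η ⁻¹' t) ≠ 0).card :=
        sum_negMulLog_le_log_card (fun _ _ => measureReal_nonneg) hsum
    _ ≤ Real.log F.card := Real.log_le_log (Nat.cast_pos.2 card_pos)
        (Nat.cast_le.2 (card_filter_measureReal_preimage_ne_zero_le hq.2.1 hF))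

lemma measureReal_inter_mul_log_le [IsFiniteMeasure P] (U V : Set Ω) :
    P.real (U ∩ V) * Real.log (P.real (U ∩ V) / (P.real U * P.real V)) ≤
      P.real (U ∩ V) * -Real.log (P.real V) := by
  rcases (measureReal_nonneg (μ := P) (s := U ∩ V)).eq_or_lt with h | h
  · simp [← h]
  have hU : P.real (U ∩ V) ≤ P.real U := measureReal_mono inter_subset_left
  have hV : 0 < P.real V := h.trans_le (measureReal_mono inter_subset_right)
  refine mul_le_mul_of_nonneg_left ?_ h.le
  rw [Real.log_div h.ne' (mul_pos (h.trans_le hU) hV).ne',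
    Real.log_mul (h.trans_le hU).ne' hV.ne']
  linarith [Real.log_le_log h hU]

lemma mutualInfo_le_log_card [IsProbabilityMeasure P] (hξ : Measurable ξ) (hη : Measurable η)
    {F : Finset B} (hF : ∀ᵐ ω ∂P, η ω ∈ F) :
    mutualInfo P ξ η ≤ ENNReal.ofReal (Real.log F.card) := by
  refine iSup₂_le fun p hp => iSup₂_le fun q hq => ENNReal.ofReal_le_ofReal ?_
  calc _ ≤ ∑ s ∈ p, ∑ t ∈ q, P.real (ξ ⁻¹' s ∩ η ⁻¹' t) * -Real.log (P.real (η ⁻¹' t)) :=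
        Finset.sum_le_sum fun s _ => Finset.sum_le_sum fun t _ =>
          measureReal_inter_mul_log_le (ξ ⁻¹' s) (η ⁻¹' t)
    _ = ∑ t ∈ q, negMulLog (P.real (η ⁻¹' t)) := by
        rw [Finset.sum_comm]
        refine Finset.sum_congr rfl fun t _ => ?_
        rw [← Finset.sum_mul, hp.sum_measureReal_inter hξ, negMulLog, mul_neg, neg_mul]
    _ ≤ Real.log F.card := sum_negMulLog_measureReal_preimage_le_log_card hη hq hF

end MutualInfo

lemma exists_measurable_forall_rel {α β : Type*} [MeasurableSpace α] [MeasurableSpace β]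
    [Countable β] {R : α → β → Prop} (hR : ∀ b, MeasurableSet {a | R a b})
    (h : ∀ a, ∃ b, R a b) : ∃ f : α → β, Measurable f ∧ ∀ a, R a (f a) := by
  classical
  rcases isEmpty_or_nonempty β with _ | _
  · have : IsEmpty α := ⟨fun a => (h a).elim fun b _ => isEmptyElim b⟩
    exact ⟨isEmptyElim, measurable_of_empty _, isEmptyElim⟩
  obtain ⟨e, he⟩ := exists_surjective_nat β
  have h' : ∀ a, ∃ k, R a (e k) := fun a => he.exists.1 (h a)
  exact ⟨fun a => e (Nat.find (h' a)),
    (measurable_from_nat (f := e)).comp (measurable_find h' fun k => hR (e k)),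
    fun a => Nat.find_spec (h' a)⟩

section SpanningSets

variable {X : Type*} [MetricSpace X] [CompactSpace X] [MeasurableSpace X]
  {T : X → X} {ε : ℝ}

lemma exists_spanning_card_eq_spanNum [OpensMeasurableSpace X] (hT : Measurable T) (n : ℕ)
    (hε : 0 < ε) :
    ∃ E : Finset X, E.card = spanNum T n ε univ ∧ ∀ x, ∃ y ∈ E, bowenDist T n x y < ε := by
  classical
  suffices h : {k | ∃ E : Finset X, E.card = k ∧
      ∀ x ∈ univ, ∃ y ∈ E, bowenDist T n x y < ε}.Nonempty by
    obtain ⟨E, hE_card, hE⟩ := Nat.sInf_mem h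
    exact ⟨E, hE_card, fun x => hE x (mem_univ x)⟩
  obtain ⟨κ, _, p, -, hp⟩ := exists_finite_coloring_bowenDist hT n hε
  have : Fintype (range p) := Fintype.ofFinite _
  refine ⟨_, Finset.univ.image (rangeSplitting p), rfl, fun x _ => ?_⟩
  exact ⟨rangeSplitting p ⟨p x, x, rfl⟩, Finset.mem_image_of_mem _ (Finset.mem_univ _),
    hp _ _ (apply_rangeSplitting p ⟨p x, x, rfl⟩).symm⟩

lemma measurable_bowenDist_left [OpensMeasurableSpace X] (hT : Measurable T) (n : ℕ) (y : X) :
    Measurable fun x => bowenDist T n x y :=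
  .iSup fun k => (hT.iterate k).dist measurable_const

lemma exists_measurable_spanning [BorelSpace X] (hT : Measurable T) (n : ℕ) (hε : 0 < ε) :
    ∃ (E : Finset X) (f : X → E), E.card = spanNum T n ε univ ∧ Measurable f ∧
      ∀ x, bowenDist T n x (f x) < ε := by
  obtain ⟨E, hE_card, hE⟩ := exists_spanning_card_eq_spanNum hT n hε
  obtain ⟨f, hf, hf_close⟩ := exists_measurable_forall_rel (β := E)
    (R := fun x y => bowenDist T n x y < ε)
    (fun y => measurableSet_lt (measurable_bowenDist_left hT n y) measurable_const)
    fun x => let ⟨y, hy, hxy⟩ := hE x; ⟨⟨y, hy⟩, hxy⟩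
  exact ⟨E, f, hE_card, hf, hf_close⟩

end SpanningSets

lemma errCount_orbit_eq_zero {X : Type*} [MetricSpace X] {T : X → X} {n : ℕ} {ε : ℝ}
    (hε : 0 < ε) {x y : X} (h : bowenDist T n x y < ε) :
    errCount T n ε x (fun k => T^[k] y) = 0 := by
  have : IsEmpty {k : Fin n // ε ≤ dist (T^[k] x) (T^[k] y)} :=
    ⟨fun k => k.2.not_gt ((bowenDist_lt_iff hε).1 h k.1 k.1.2)⟩
  exact Nat.card_of_isEmpty

section UpperBound

variable {X : Type*} [MetricSpace X] [MeasurableSpace X] [BorelSpace X] {T : X → X} {n : ℕ}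
  {ε s : ℝ} {μ : Measure X} [IsProbabilityMeasure μ]

lemma RDistLInftyS_le_log_card_div (hn : 0 < n) (hs : 0 < s) {η : X → Fin n → X}
    (hη : Measurable η) {F : Finset (Fin n → X)} (hF : ∀ x, η x ∈ F)
    (h : ∀ x, errCount T n ε x (η x) = 0) :
    RDistLInftyS T μ ε s ≤ ENNReal.ofReal (Real.log F.card) / n := by
  classical
  have hG : Measurable fun x => (x, η x) := measurable_id.prodMk hη
  have isProbabilityMeasure_map := Measure.isProbabilityMeasure_map (μ := μ) hG.aemeasurable
  have ae_mem : ∀ᵐ z ∂μ.map fun x => (x, η x), z.2 ∈ F :=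
    (ae_map_iff hG.aemeasurable (measurable_snd F.measurableSet)).2 (.of_forall hF)
  have map_fst : (μ.map fun x => (x, η x)).map Prod.fst = μ :=
    (Measure.map_map measurable_fst hG).trans Measure.map_id
  have finite_range : (μ.map fun x => (x, η x))
      {z | ∀ k, z.2 k ∈ F.biUnion fun y => Finset.univ.image y} = 1 := by
    refine le_antisymm prob_le_one (le_of_eq_of_le ?_ (Measure.le_map_apply hG.aemeasurable _))
    rw [← measure_univ (μ := μ), eq_comm]
    exact congrArg μ (eq_univ_of_forall fun x k => Finset.mem_biUnion.2
      ⟨η x, hF x, Finset.mem_image_of_mem _ (Finset.mem_univ k)⟩)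
  have err_lt : ∫⁻ z, (errCount T n ε z.1 z.2 : ℝ≥0∞) ∂μ.map (fun x => (x, η x))
      < ENNReal.ofReal (s * n) := by
    refine (lintegral_map_le _ _).trans_lt ?_
    simp only [h, Nat.cast_zero, lintegral_zero, ENNReal.ofReal_pos]
    positivity
  exact (iInf₂_le_of_le n hn <| iInf₂_le_of_le _ isProbabilityMeasure_map <|
    iInf₂_le_of_le map_fst ⟨_, finite_range⟩ <| iInf_le _ err_lt).trans
    (ENNReal.div_le_div_right (mutualInfo_le_log_card measurable_fst measurable_snd ae_mem) _)

variable [CompactSpace X]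

lemma RDistLInftyS_le_log_spanNum_div (hT : Measurable T) (hn : 0 < n) (hε : 0 < ε) (hs : 0 < s) :
    RDistLInftyS T μ ε s ≤ ENNReal.ofReal (Real.log (spanNum T n ε univ)) / n := by
  classical
  obtain ⟨x₀⟩ : Nonempty X := nonempty_of_isProbabilityMeasure μ
  obtain ⟨E, f, hE_card, hf, hf_close⟩ := exists_measurable_spanning hT n hε
  let orbit : E → Fin n → X := fun y k => T^[k] y
  have orbit_mem : ∀ y, orbit y ∈ Finset.univ.image orbit := by simp
  refine (RDistLInftyS_le_log_card_div hn hs ((measurable_of_countable orbit).comp hf)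
    (fun x => orbit_mem (f x)) fun x => errCount_orbit_eq_zero hε (hf_close x)).trans ?_
  refine ENNReal.div_le_div_right (ENNReal.ofReal_le_ofReal (Real.log_le_log
    (Nat.cast_pos.2 (Finset.card_pos.2 ⟨_, orbit_mem (f x₀)⟩)) (Nat.cast_le.2 ?_))) _
  simpa [hE_card] using Finset.card_image_le (s := Finset.univ) (f := orbit)

lemma RDistLInfty_le_spanGrowth (hT : Measurable T) (hε : 0 < ε) :
    RDistLInfty T μ ε ≤ spanGrowth T ε := by
  refine iSup₂_le fun s hs => ?_
  rw [← limsup_const (f := (atTop : Filter ℕ)) (RDistLInftyS T μ ε s)]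
  refine limsup_le_limsup ?_
  filter_upwards [eventually_gt_atTop 0] with n hn
  exact RDistLInftyS_le_log_spanNum_div hT hn hε hs

end UpperBound

lemma exists_pos_log_one_add_mul_exp_neg_lt (c : ℝ) {δ : ℝ} (hδ : 0 < δ) :
    ∃ θ : ℝ, 0 < θ ∧ Real.log (1 + c * Real.exp (-θ)) < δ := by
  have h : Tendsto (fun θ : ℝ => Real.log (1 + c * Real.exp (-θ))) atTop (𝓝 0) := by
    simpa using ((Real.tendsto_exp_neg_atTop_nhds_zero.const_mul c).const_add 1).log (by simp)
  exact ((eventually_gt_atTop 0).and (h.eventually_lt_const hδ)).exists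

section LowerBound

variable {X : Type*} [MetricSpace X] [CompactSpace X] [MeasurableSpace X] [BorelSpace X]
  {T : X → X} {ε : ℝ}

lemma exists_ergodic_ofReal_sub_le_RDistLInfty (hT : Continuous T) (hε : 0 < ε) {a δ : ℝ}
    (ha : 0 ≤ a) (hδ : 0 < δ) (h : ENNReal.ofReal a < spanGrowth T (6 * ε)) :
    ∃ μ : ProbabilityMeasure X, Ergodic T (μ : Measure X) ∧
      ENNReal.ofReal (a - δ) ≤ RDistLInfty T (μ : Measure X) ε := by
  obtain ⟨κ, _, p, -, hp⟩ := exists_finite_coloring (X := X) (r := 6 * ε) (by positivity)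
  obtain ⟨θ, hθ, hθ_log⟩ := exists_pos_log_one_add_mul_exp_neg_lt (Fintype.card κ) (half_pos hδ)
  obtain ⟨μ₀, hμ₀, hμ₀_rate⟩ :=
    exists_measurePreserving_le_lagrangianRate hT hε hθ.le hp ha h
  obtain ⟨μ, hμ, hμ_rate⟩ := exists_ergodic_lagrangianRate_le (ε := ε) hT hθ.le hμ₀
  have hs : 0 < δ / 2 / θ := by positivity
  refine ⟨μ, hμ, le_iSup₂_of_le (δ / 2 / θ) hs <| le_trans (ENNReal.ofReal_le_ofReal ?_)
    (ofReal_lagrangianRate_sub_le_RDistLInftyS hT hε hθ.le hs.le)⟩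
  rw [mul_div_cancel₀ _ hθ.ne']
  linarith

lemma spanGrowth_le_iSup_ergodic_RDistLInfty (hT : Continuous T) (hε : 0 < ε) :
    spanGrowth T (6 * ε) ≤
      ⨆ (μ : Measure X) (_ : IsProbabilityMeasure μ) (_ : Ergodic T μ), RDistLInfty T μ ε := by
  refine ENNReal.le_of_forall_nnreal_lt fun a ha =>
    ENNReal.le_of_forall_pos_le_add fun δ hδ _ => ?_
  obtain ⟨μ, hμ, hμ_le⟩ := exists_ergodic_ofReal_sub_le_RDistLInfty hT hε a.coe_nonneg
    (NNReal.coe_pos.2 hδ) (by rwa [ENNReal.ofReal_coe_nnreal])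
  calc (a : ℝ≥0∞) = ENNReal.ofReal (a - δ + δ) := by simp
    _ ≤ ENNReal.ofReal (a - δ) + δ := by
        simpa using ENNReal.ofReal_add_le (p := (a : ℝ) - δ) (q := δ)
    _ ≤ _ := by
        gcongr
        exact hμ_le.trans (le_iSup_of_le (μ : Measure X) (le_iSup₂_of_le inferInstance hμ le_rfl))

end LowerBound

section Rescaling

lemma tendsto_log_one_div_nhdsGT_zero :
    Tendsto (fun ε : ℝ => Real.log (1 / ε)) (𝓝[>] 0) atTop := by
  simpa only [one_div] using! Real.tendsto_log_atTop.comp tendsto_inv_nhdsGT_zero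

lemma tendsto_log_div_div_log {c : ℝ} (hc : 0 < c) :
    Tendsto (fun ε : ℝ => Real.log (1 / (ε / c)) / Real.log (1 / ε)) (𝓝[>] 0) (𝓝 1) := by
  have h : Tendsto (fun ε : ℝ => Real.log c / Real.log (1 / ε) + 1) (𝓝[>] 0) (𝓝 1) := by
    simpa using (tendsto_log_one_div_nhdsGT_zero.const_div_atTop (Real.log c)).add_const 1
  refine h.congr' ?_
  filter_upwards [tendsto_log_one_div_nhdsGT_zero.eventually_gt_atTop 0, self_mem_nhdsWithin]
    with ε hlog hε
  rw [div_add_one hlog.ne', ← Real.log_mul hc.ne' (one_div_pos.2 hε).ne', one_div_div, mul_one_div]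

lemma tendsto_div_nhdsGT_zero {c : ℝ} (hc : 0 < c) :
    Tendsto (fun ε : ℝ => ε / c) (𝓝[>] 0) (𝓝[>] 0) := by
  simpa only [div_eq_inv_mul] using tendsto_iff_comap.2
    (comap_mulLeft_nhdsGT_zero (inv_pos.2 hc)).ge

lemma limsup_div_log_le_of_comp_mul_le {f g : ℝ → ℝ≥0∞} {c : ℝ} (hc : 0 < c)
    (h : ∀ ε, 0 < ε → f (c * ε) ≤ g ε) :
    limsup (fun ε : ℝ => f ε / ENNReal.ofReal (Real.log (1 / ε))) (𝓝[>] 0) ≤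
      limsup (fun ε : ℝ => g ε / ENNReal.ofReal (Real.log (1 / ε))) (𝓝[>] 0) := by
  set G : ℝ → ℝ≥0∞ := fun ε => g ε / ENNReal.ofReal (Real.log (1 / ε))
  set ρ : ℝ → ℝ≥0∞ := fun ε => ENNReal.ofReal (Real.log (1 / (ε / c)) / Real.log (1 / ε))
  have limsup_ρ : limsup ρ (𝓝[>] 0) = 1 :=
    (ENNReal.tendsto_ofReal (tendsto_log_div_div_log hc)).limsup_eq.trans ENNReal.ofReal_one
  have log_pos := tendsto_log_one_div_nhdsGT_zero.eventually_gt_atTop 0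
  have le_mul : ∀ᶠ ε in 𝓝[>] (0 : ℝ),
      f ε / ENNReal.ofReal (Real.log (1 / ε)) ≤ G (ε / c) * ρ ε := by
    filter_upwards [log_pos, (tendsto_div_nhdsGT_zero hc).eventually log_pos,
      self_mem_nhdsWithin] with ε hlog hlog' hε
    have cancel : G (ε / c) * ENNReal.ofReal (Real.log (1 / (ε / c))) = g (ε / c) :=
      ENNReal.div_mul_cancel (ENNReal.ofReal_pos.2 hlog').ne' ENNReal.ofReal_ne_top
    rw [show ρ ε = _ from ENNReal.ofReal_div_of_pos hlog, ← mul_div_assoc, cancel]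
    refine ENNReal.div_le_div_right ?_ _
    simpa only [mul_div_cancel₀ _ hc.ne'] using h (ε / c) (div_pos hε hc)
  calc _ ≤ limsup (fun ε => G (ε / c) * ρ ε) (𝓝[>] 0) := limsup_le_limsup le_mul
    _ ≤ limsup (fun ε => G (ε / c)) (𝓝[>] 0) * limsup ρ (𝓝[>] 0) :=
        ENNReal.limsup_mul_le' (.inr (by simp [limsup_ρ])) (.inr (by simp [limsup_ρ]))
    _ = limsup (fun ε => G (ε / c)) (𝓝[>] 0) := by rw [limsup_ρ, mul_one]
    _ ≤ limsup G (𝓝[>] 0) := limsup_le_limsup_of_le (u := G) (tendsto_div_nhdsGT_zero hc)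

end Rescaling

end MMD

/-- Theorem 1.1 (upper part): the variational principle for the upper metric mean dimension
in terms of the `L^∞` rate distortion function ranges only over ergodic measures. -/
theorem stmt0 {X : Type*} [MetricSpace X] [CompactSpace X] [MeasurableSpace X] [BorelSpace X]
    (T : X → X) (hT : Continuous T) :
    mdimMUpper T = Filter.limsup (fun ε : ℝ =>
      (⨆ (μ : Measure X) (_ : IsProbabilityMeasure μ) (_ : Ergodic T μ), RDistLInfty T μ ε)
        / ENNReal.ofReal (Real.log (1 / ε))) (nhdsWithin 0 (Set.Ioi 0)) := by
  have upper : ∀ ε, 0 < ε →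
      ⨆ (μ : Measure X) (_ : IsProbabilityMeasure μ) (_ : Ergodic T μ), RDistLInfty T μ ε
        ≤ spanGrowth T ε := fun ε hε =>
    iSup₂_le fun _ _ => iSup_le fun _ => RDistLInfty_le_spanGrowth hT.measurable hε
  refine le_antisymm ?_ (limsup_div_log_le_of_comp_mul_le one_pos fun ε hε => ?_)
  · exact limsup_div_log_le_of_comp_mul_le (c := 6) (by norm_num) fun ε hε =>
      spanGrowth_le_iSup_ergodic_RDistLInfty hT hε
  · simpa only [one_mul] using upper ε hε
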